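/- arXiv:1902.02899 — 5 statements merged into one kernel-verified Lean document; each statement's English description precedes it below -/
import Mathlib

section
/- Let μ : ℛ → ℝ((X)) be finitely additive and left translation-invariant with μ(g K_{i,j}) = (q³/((q²−1)(q−1))) q^{−4i} X^{4j} for every g ∈ GL_2(F) and every (i,j) > (0,0). Then μ is also right translation-invariant: for every A ∈ ℛ and every h ∈ GL_2(F) such that the right translate Ah belongs to ℛ, one has μ(Ah) = μ(A). -/
/-!
Write `K_p` for `K_{i,j}` with `p = (i,j)`. By the Cartan decomposition, `h = k₁ d k₂` with
`k₁, k₂ ∈ GL₂(O_F)` and `d` diagonal (`VHyp.cartan`), so right translation by `GL₂(O_F)` and by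
diagonal matrices can be treated separately. Two additive functions on `ℛ` that agree on left
cosets of the `K_p` agree on `ℛ`, by Dynkin's argument, because cosets are stable under
intersection (`VHyp.addOn_ext`). As `GL₂(O_F)` normalizes every `K_p`, this settles the factors
`k₁` and `k₂` (`VHyp.mu_rmul_GLO`).

A diagonal matrix `d` need not preserve `ℛ`, but if `A` and `A d` both lie in `ℛ` and `A` is
nonempty, then the two entries of `d` have the same second valuation (`VHyp.diag_level`). Indeed a
nonempty `A ∈ ℛ` has a level `j`: it is covered by finitely many cosets of groups `K_{i,j}` with
this `j`, and it contains a coset of such a group up to a set of higher level. Conjugation by `d`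
shifts valuations on the two unipotent subgroups in opposite directions, and a pigeonhole argument
on unipotent elements shows that neither shift can change the level.

When the second valuations agree, conjugation by `d` moves `K_{i,j}` by at most `N` steps in the
first index, so `K_{i,j} d` is a union of `n_i` left cosets of `K_{i+N,j}`, whereas `K_{i,j}` is a
union of `m = q^{4N}` of them. Additivity gives `n_i = n_{i+N}`. With `w` the swap matrix, `d w d`
is a scalar multiple of `w`, which gives `n_i n_{i+N} = m²`. Hence `n_i = m`, and
`μ(K_{i,j} d) = μ(K_{i,j})` (`VHyp.mu_rmul_diag`).
-/

open Matrix

noncomputable section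

/-- The lexicographic-from-the-right (non-strict) order on `ℤ × ℤ`:
`(i,j) ≤ (m,n)` iff `j < n`, or `j = n` and `i ≤ m`. -/
def RLex (a b : ℤ × ℤ) : Prop := a.2 < b.2 ∨ (a.2 = b.2 ∧ a.1 ≤ b.1)

/-- The lexicographic-from-the-right strict order on `ℤ × ℤ`:
`(i,j) < (m,n)` iff `j < n`, or `j = n` and `i < m`. -/
def RLt (a b : ℤ × ℤ) : Prop := a.2 < b.2 ∨ (a.2 = b.2 ∧ a.1 < b.1)

/-- The left translate `g • A` of a subset `A` of a group. -/
def lmul {G : Type*} [Group G] (g : G) (A : Set G) : Set G := (fun x => g * x) '' A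

/-- The set `K_{i,j} = I₂ + t₁^i t₂^j M₂(O_F)` inside `GL₂(F)` (a subgroup when
`(i,j) > (0,0)`). -/
def Kmat {F : Type*} [Field F] (O : Subring F) (t1 t2 : F) (i j : ℤ) :
    Set (GL (Fin 2) F) :=
  {g | ∀ a b : Fin 2, ∃ c ∈ O,
    (g : Matrix (Fin 2) (Fin 2) F) a b
      = (1 : Matrix (Fin 2) (Fin 2) F) a b + t1 ^ i * t2 ^ j * c}

/-- Distinguished subsets of `GL₂(F)`: the empty set and the left cosets `g K_{i,j}`
with `(i,j) > (0,0)`. -/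
def Dist2 {F : Type*} [Field F] (O : Subring F) (t1 t2 : F)
    (D : Set (GL (Fin 2) F)) : Prop :=
  D = ∅ ∨ ∃ (g : GL (Fin 2) F) (i j : ℤ), RLt (0, 0) (i, j) ∧ D = lmul g (Kmat O t1 t2 i j)

/-- The ring `ℛ` of subsets of `GL₂(F)`: the smallest collection containing all
distinguished sets and closed under binary unions, intersections and differences. -/
inductive RMem {F : Type*} [Field F] (O : Subring F) (t1 t2 : F) :
    Set (GL (Fin 2) F) → Prop
  | dist (D : Set (GL (Fin 2) F)) : Dist2 O t1 t2 D → RMem O t1 t2 D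
  | union (A B : Set (GL (Fin 2) F)) : RMem O t1 t2 A → RMem O t1 t2 B → RMem O t1 t2 (A ∪ B)
  | inter (A B : Set (GL (Fin 2) F)) : RMem O t1 t2 A → RMem O t1 t2 B → RMem O t1 t2 (A ∩ B)
  | diff (A B : Set (GL (Fin 2) F)) : RMem O t1 t2 A → RMem O t1 t2 B → RMem O t1 t2 (A \ B)

/-- The set `K = GL₂(O_F)`: matrices whose entries, together with the entries of the
inverse matrix, lie in the rank-two ring of integers `O_F`. -/
def GLO {F : Type*} [Field F] (O : Subring F) : Set (GL (Fin 2) F) :=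
  {g | (∀ a b : Fin 2, (g : Matrix (Fin 2) (Fin 2) F) a b ∈ O) ∧
    ∀ a b : Fin 2, ((g⁻¹ : GL (Fin 2) F) : Matrix (Fin 2) (Fin 2) F) a b ∈ O}

/-! ### The valuation and the balls it defines -/

/-- The standing hypotheses on the valuation, the ring of integers and the two uniformizers. -/
structure VHyp {F : Type*} [Field F] (v : F → ℤ × ℤ) (O : Subring F) (t1 t2 : F) : Prop where
  mul : ∀ x y : F, x ≠ 0 → y ≠ 0 → v (x * y) = v x + v y
  add : ∀ x y : F, x ≠ 0 → y ≠ 0 → x + y ≠ 0 →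
      RLex (v x) (v (x + y)) ∨ RLex (v y) (v (x + y))
  memO : ∀ x : F, x ∈ O ↔ x = 0 ∨ RLex (0, 0) (v x)
  t1_ne : t1 ≠ 0
  t2_ne : t2 ≠ 0
  vt1 : v t1 = (1, 0)
  vt2 : v t2 = (0, 1)

/-- `x` lies in the closed ball of valuation at least `p` around zero, with `v 0 = ∞`. -/
def VGe {F : Type*} [Field F] (v : F → ℤ × ℤ) (p : ℤ × ℤ) (x : F) : Prop :=
  x = 0 ∨ RLex p (v x)

section Valuation

variable {F : Type*} [Field F] {v : F → ℤ × ℤ} {O : Subring F} {t1 t2 : F}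

theorem RLex.trans' {a b c : ℤ × ℤ} (h : RLex a b) (h' : RLex b c) : RLex a c := by
  unfold RLex at *; omega

theorem VGe.mono {p p' : ℤ × ℤ} {x : F} (h : VGe v p x) (hp : RLex p' p) : VGe v p' x :=
  h.imp id fun h => hp.trans' h

theorem VGe.zero (p : ℤ × ℤ) : VGe v p (0 : F) := Or.inl rfl

namespace VHyp

theorem v_one (H : VHyp v O t1 t2) : v 1 = 0 := by
  have := H.mul 1 1 one_ne_zero one_ne_zero
  simpa using this

theorem v_inv (H : VHyp v O t1 t2) {x : F} (hx : x ≠ 0) : v x⁻¹ = - v x := by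
  have := H.mul x x⁻¹ hx (inv_ne_zero hx)
  rw [mul_inv_cancel₀ hx, H.v_one] at this
  exact (neg_eq_of_add_eq_zero_right this.symm).symm

theorem v_neg (H : VHyp v O t1 t2) (x : F) : v (-x) = v x := by
  have h1 := H.mul (-1) (-1) (by simp) (by simp)
  have h2 : v (-1) = 0 := by
    simp only [mul_neg, mul_one, neg_neg, H.v_one] at h1
    have e1 := congrArg Prod.fst h1
    have e2 := congrArg Prod.snd h1
    simp only [Prod.fst_zero, Prod.snd_zero, Prod.fst_add, Prod.snd_add] at e1 e2
    ext <;> simp <;> omega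
  by_cases hx : x = 0
  · simp [hx]
  · have := H.mul (-1) x (by simp) hx
    simpa [h2] using this

theorem v_pow (H : VHyp v O t1 t2) {x : F} (hx : x ≠ 0) (n : ℕ) : v (x ^ n) = n • v x := by
  induction n with
  | zero => simpa using H.v_one
  | succ n ih => rw [pow_succ, H.mul _ _ (pow_ne_zero _ hx) hx, ih, succ_nsmul]

theorem v_zpow (H : VHyp v O t1 t2) {x : F} (hx : x ≠ 0) (n : ℤ) : v (x ^ n) = n • v x := by
  cases n with
  | ofNat n => simpa using H.v_pow hx n
  | negSucc n =>
    rw [zpow_negSucc, H.v_inv (pow_ne_zero _ hx), H.v_pow hx, negSucc_zsmul]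

theorem v_t (H : VHyp v O t1 t2) (i j : ℤ) : v (t1 ^ i * t2 ^ j) = (i, j) := by
  rw [H.mul _ _ (zpow_ne_zero _ H.t1_ne) (zpow_ne_zero _ H.t2_ne), H.v_zpow H.t1_ne,
    H.v_zpow H.t2_ne, H.vt1, H.vt2]
  simp

theorem t_ne (H : VHyp v O t1 t2) (i j : ℤ) : t1 ^ i * t2 ^ j ≠ 0 :=
  mul_ne_zero (zpow_ne_zero _ H.t1_ne) (zpow_ne_zero _ H.t2_ne)

theorem ge_add (H : VHyp v O t1 t2) {p : ℤ × ℤ} {x y : F} (hx : VGe v p x) (hy : VGe v p y) :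
    VGe v p (x + y) := by
  by_cases h0 : x = 0
  · simpa [h0] using hy
  by_cases h1 : y = 0
  · simpa [h1] using hx
  by_cases h2 : x + y = 0
  · exact Or.inl h2
  rcases H.add x y h0 h1 h2 with h | h
  · exact Or.inr ((hx.resolve_left h0).trans' h)
  · exact Or.inr ((hy.resolve_left h1).trans' h)

theorem ge_neg (H : VHyp v O t1 t2) {p : ℤ × ℤ} {x : F} (hx : VGe v p x) : VGe v p (-x) := by
  unfold VGe at *
  rwa [H.v_neg, neg_eq_zero]

theorem ge_sub (H : VHyp v O t1 t2) {p : ℤ × ℤ} {x y : F} (hx : VGe v p x) (hy : VGe v p y) :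
    VGe v p (x - y) := by
  rw [sub_eq_add_neg]; exact H.ge_add hx (H.ge_neg hy)

theorem ge_mul (H : VHyp v O t1 t2) {p p' : ℤ × ℤ} {x y : F} (hx : VGe v p x)
    (hy : VGe v p' y) : VGe v (p + p') (x * y) := by
  by_cases h0 : x = 0
  · simp [h0, VGe]
  by_cases h1 : y = 0
  · simp [h1, VGe]
  have a := hx.resolve_left h0
  have b := hy.resolve_left h1
  right
  rw [H.mul _ _ h0 h1]
  unfold RLex at *
  simp only [Prod.fst_add, Prod.snd_add]
  omega

theorem ge_mul_left (H : VHyp v O t1 t2) {p : ℤ × ℤ} {x y : F} (hx : VGe v 0 x)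
    (hy : VGe v p y) : VGe v p (x * y) := by
  simpa using H.ge_mul hx hy

theorem ge_mul_right (H : VHyp v O t1 t2) {p : ℤ × ℤ} {x y : F} (hx : VGe v p x)
    (hy : VGe v 0 y) : VGe v p (x * y) := by
  simpa using H.ge_mul hx hy

theorem ge_one (H : VHyp v O t1 t2) : VGe v 0 (1 : F) := by
  right; rw [H.v_one]; simp [RLex]

/-- A one-unit is a unit of the ring of integers. -/
theorem v_one_add (H : VHyp v O t1 t2) {p : ℤ × ℤ} (hp : RLt (0, 0) p) {x : F}
    (hx : VGe v p x) : 1 + x ≠ 0 ∧ v (1 + x) = 0 := by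
  by_cases h0 : x = 0
  · simp [h0, H.v_one]
  have a := hx.resolve_left h0
  have h1 : 1 + x ≠ 0 := by
    intro h
    have : x = -1 := by linear_combination h
    rw [this, H.v_neg, H.v_one] at a
    unfold RLex RLt at *
    simp at a hp; omega
  refine ⟨h1, ?_⟩
  have b := H.add 1 x one_ne_zero h0 h1
  have c := H.add (1 + x) (-x) h1 (by simpa) (by simp)
  simp only [add_neg_cancel_right, H.v_neg, H.v_one] at b c
  unfold RLex RLt at *
  simp only [Prod.fst_zero, Prod.snd_zero] at *
  ext <;> simp only [Prod.fst_zero, Prod.snd_zero] <;> omega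

theorem memO_iff (H : VHyp v O t1 t2) {x : F} : x ∈ O ↔ VGe v 0 x := H.memO x

theorem ball_iff (H : VHyp v O t1 t2) (i j : ℤ) (x : F) :
    (∃ c ∈ O, x = t1 ^ i * t2 ^ j * c) ↔ VGe v (i, j) x := by
  constructor
  · rintro ⟨c, hc, rfl⟩
    refine H.ge_mul_right ?_ (H.memO_iff.1 hc)
    right; rw [H.v_t]; simp [RLex]
  · intro h
    refine ⟨(t1 ^ i * t2 ^ j)⁻¹ * x, ?_, ?_⟩
    · rw [H.memO_iff]
      have : VGe v (-(i, j)) (t1 ^ i * t2 ^ j)⁻¹ := by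
        right; rw [H.v_inv (H.t_ne i j), H.v_t]; simp [RLex]
      have := H.ge_mul this h
      rwa [neg_add_cancel] at this
    · rw [mul_inv_cancel_left₀ (H.t_ne i j)]

/-! ### The congruence subgroups -/

theorem mem_K (H : VHyp v O t1 t2) {i j : ℤ} {g : GL (Fin 2) F} :
    g ∈ Kmat O t1 t2 i j ↔
      ∀ a b, VGe v (i, j) ((g : Matrix (Fin 2) (Fin 2) F) a b - (1 : Matrix (Fin 2) (Fin 2) F) a b) := by
  unfold Kmat
  simp only [Set.mem_ofPred_eq, ← H.ball_iff, sub_eq_iff_eq_add']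

/-- Every entry of `M` has valuation at least `p`. -/
def _root_.MGe {F : Type*} [Field F] (v : F → ℤ × ℤ) (p : ℤ × ℤ) (M : Matrix (Fin 2) (Fin 2) F) :
    Prop := ∀ a b, VGe v p (M a b)

theorem mge_add (H : VHyp v O t1 t2) {p : ℤ × ℤ} {M N : Matrix (Fin 2) (Fin 2) F}
    (hM : MGe v p M) (hN : MGe v p N) : MGe v p (M + N) := fun a b => H.ge_add (hM a b) (hN a b)

theorem mge_neg (H : VHyp v O t1 t2) {p : ℤ × ℤ} {M : Matrix (Fin 2) (Fin 2) F}
    (hM : MGe v p M) : MGe v p (-M) := fun a b => H.ge_neg (hM a b)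

theorem mge_mul (H : VHyp v O t1 t2) {p p' : ℤ × ℤ} {M N : Matrix (Fin 2) (Fin 2) F}
    (hM : MGe v p M) (hN : MGe v p' N) : MGe v (p + p') (M * N) := fun a b => by
  rw [Matrix.mul_apply, Fin.sum_univ_two]
  exact H.ge_add (H.ge_mul (hM _ _) (hN _ _)) (H.ge_mul (hM _ _) (hN _ _))

theorem mge_mul_left (H : VHyp v O t1 t2) {p : ℤ × ℤ} {M N : Matrix (Fin 2) (Fin 2) F}
    (hM : MGe v 0 M) (hN : MGe v p N) : MGe v p (M * N) := by
  simpa using H.mge_mul hM hN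

theorem mge_mul_right (H : VHyp v O t1 t2) {p : ℤ × ℤ} {M N : Matrix (Fin 2) (Fin 2) F}
    (hM : MGe v p M) (hN : MGe v 0 N) : MGe v p (M * N) := by
  simpa using H.mge_mul hM hN

theorem mge_one (H : VHyp v O t1 t2) : MGe v 0 (1 : Matrix (Fin 2) (Fin 2) F) := fun a b => by
  rw [Matrix.one_apply]; split_ifs
  · exact H.ge_one
  · exact VGe.zero _

theorem mem_K' (H : VHyp v O t1 t2) {i j : ℤ} {g : GL (Fin 2) F} :
    g ∈ Kmat O t1 t2 i j ↔ MGe v (i, j) ((g : Matrix (Fin 2) (Fin 2) F) - 1) := H.mem_K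

theorem K_le (H : VHyp v O t1 t2) {i j i' j' : ℤ} (h : RLex (i, j) (i', j')) :
    Kmat O t1 t2 i' j' ⊆ Kmat O t1 t2 i j := fun _ hg =>
  H.mem_K.2 fun a b => (H.mem_K.1 hg a b).mono h

theorem K_one (H : VHyp v O t1 t2) (i j : ℤ) : 1 ∈ Kmat O t1 t2 i j :=
  H.mem_K.2 fun a b => by simpa using VGe.zero _

theorem mge_of_K (H : VHyp v O t1 t2) {i j : ℤ} (hp : RLt (0, 0) (i, j)) {g : GL (Fin 2) F}
    (hg : g ∈ Kmat O t1 t2 i j) : MGe v 0 (g : Matrix (Fin 2) (Fin 2) F) := by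
  have h : MGe v 0 ((g : Matrix (Fin 2) (Fin 2) F) - 1) := fun a b =>
    (H.mem_K.1 hg a b).mono (by unfold RLt at hp; unfold RLex; simp at *; omega)
  simpa using H.mge_add h H.mge_one

theorem mge_inv_of_K (H : VHyp v O t1 t2) {i j : ℤ} (hp : RLt (0, 0) (i, j)) {g : GL (Fin 2) F}
    (hg : g ∈ Kmat O t1 t2 i j) : MGe v 0 ((g⁻¹ : GL (Fin 2) F) : Matrix (Fin 2) (Fin 2) F) := by
  have h0 := H.mge_of_K hp hg
  have h1 := H.mem_K.1 hg
  have hdet : (g : Matrix (Fin 2) (Fin 2) F).det = 1 + ((g 0 0 - 1) * g 1 1 + (g 1 1 - 1)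
      - g 0 1 * g 1 0) := by
    rw [Matrix.det_fin_two]; ring
  have hv : VGe v (i, j) ((g 0 0 - 1) * g 1 1 + (g 1 1 - 1) - g 0 1 * g 1 0) := by
    refine H.ge_sub (H.ge_add (H.ge_mul_right ?_ (h0 _ _)) ?_) (H.ge_mul_right ?_ (h0 _ _))
    · simpa using h1 0 0
    · simpa using h1 1 1
    · simpa using h1 0 1
  obtain ⟨hne, hv0⟩ := H.v_one_add hp hv
  rw [← hdet] at hne hv0
  have hd : VGe v 0 ((g : Matrix (Fin 2) (Fin 2) F).det)⁻¹ := by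
    right; rw [H.v_inv hne, hv0]; simp [RLex]
  rw [Matrix.coe_units_inv, Matrix.inv_def, Ring.inverse_eq_inv', Matrix.adjugate_fin_two]
  intro a b
  rw [Matrix.smul_apply, smul_eq_mul]
  refine H.ge_mul_left hd ?_
  fin_cases a <;> fin_cases b
  · exact h0 1 1
  · exact H.ge_neg (h0 0 1)
  · exact H.ge_neg (h0 1 0)
  · exact h0 0 0

theorem K_mul (H : VHyp v O t1 t2) {i j : ℤ} (hp : RLt (0, 0) (i, j)) {g k : GL (Fin 2) F}
    (hg : g ∈ Kmat O t1 t2 i j) (hk : k ∈ Kmat O t1 t2 i j) : g * k ∈ Kmat O t1 t2 i j := by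
  rw [H.mem_K'] at *
  have e : ((g * k : GL (Fin 2) F) : Matrix (Fin 2) (Fin 2) F) - 1 =
      ((g : Matrix (Fin 2) (Fin 2) F) - 1) * k + ((k : Matrix (Fin 2) (Fin 2) F) - 1) := by
    rw [Units.val_mul]; noncomm_ring
  rw [e]
  exact H.mge_add (H.mge_mul_right hg (H.mge_of_K hp (H.mem_K'.2 hk))) hk

theorem K_inv (H : VHyp v O t1 t2) {i j : ℤ} (hp : RLt (0, 0) (i, j)) {g : GL (Fin 2) F}
    (hg : g ∈ Kmat O t1 t2 i j) : g⁻¹ ∈ Kmat O t1 t2 i j := by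
  have h := H.mge_inv_of_K hp hg
  rw [H.mem_K'] at *
  have e : ((g⁻¹ : GL (Fin 2) F) : Matrix (Fin 2) (Fin 2) F) - 1 =
      -(((g⁻¹ : GL (Fin 2) F) : Matrix (Fin 2) (Fin 2) F) * ((g : Matrix (Fin 2) (Fin 2) F) - 1)) := by
    rw [mul_sub, ← Units.val_mul]; simp
  rw [e]
  exact H.mge_neg (H.mge_mul_left h hg)

/-- Conjugation by `g` moves one congruence subgroup into another as soon as it maps the ball of
matrices defining the first into the ball defining the second. -/
theorem K_conj (H : VHyp v O t1 t2) {i j i' j' : ℤ} {g k : GL (Fin 2) F}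
    (hc : ∀ M : Matrix (Fin 2) (Fin 2) F, MGe v (i, j) M →
      MGe v (i', j') (((g⁻¹ : GL (Fin 2) F) : Matrix (Fin 2) (Fin 2) F) * M * g))
    (hk : k ∈ Kmat O t1 t2 i j) : g⁻¹ * k * g ∈ Kmat O t1 t2 i' j' := by
  rw [H.mem_K'] at *
  have e : ((g⁻¹ * k * g : GL (Fin 2) F) : Matrix (Fin 2) (Fin 2) F) - 1 =
      ((g⁻¹ : GL (Fin 2) F) : Matrix (Fin 2) (Fin 2) F) * ((k : Matrix (Fin 2) (Fin 2) F) - 1) * g := by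
    rw [mul_sub, sub_mul, mul_one, ← Units.val_mul, ← Units.val_mul, ← Units.val_mul]; simp
  rw [e]
  exact hc _ hk

theorem mem_GLO (H : VHyp v O t1 t2) {g : GL (Fin 2) F} : g ∈ GLO O ↔
    MGe v 0 (g : Matrix (Fin 2) (Fin 2) F) ∧
    MGe v 0 ((g⁻¹ : GL (Fin 2) F) : Matrix (Fin 2) (Fin 2) F) := by
  simp only [GLO, Set.mem_ofPred_eq, H.memO_iff, MGe]

theorem K_conj_GLO (H : VHyp v O t1 t2) {i j : ℤ} {g k : GL (Fin 2) F} (hg : g ∈ GLO O)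
    (hk : k ∈ Kmat O t1 t2 i j) : g⁻¹ * k * g ∈ Kmat O t1 t2 i j :=
  H.K_conj (fun _ hM => H.mge_mul_right (H.mge_mul_left (H.mem_GLO.1 hg).2 hM)
    (H.mem_GLO.1 hg).1) hk

theorem GLO_inv (H : VHyp v O t1 t2) {g : GL (Fin 2) F} (hg : g ∈ GLO O) : g⁻¹ ∈ GLO O := by
  rw [H.mem_GLO] at *; simpa using hg.symm

theorem GLO_mul (H : VHyp v O t1 t2) {g k : GL (Fin 2) F} (hg : g ∈ GLO O) (hk : k ∈ GLO O) :
    g * k ∈ GLO O := by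
  rw [H.mem_GLO] at *
  rw [_root_.mul_inv_rev, Units.val_mul, Units.val_mul]
  exact ⟨H.mge_mul_left hg.1 hk.1, H.mge_mul_left hk.2 hg.2⟩

end VHyp

end Valuation

/-! ### Finite covers by cosets -/

section Cover

variable {G : Type*} [Group G]

theorem mem_lmul {g x : G} {A : Set G} : x ∈ lmul g A ↔ g⁻¹ * x ∈ A := by
  unfold lmul
  constructor
  · rintro ⟨y, hy, rfl⟩; simpa using hy
  · intro h; exact ⟨_, h, by simp⟩

/-- `S` is covered by finitely many left translates of `K`. -/
def Cov (K S : Set G) : Prop := ∃ T : Set G, T.Finite ∧ ∀ x ∈ S, ∃ g ∈ T, g⁻¹ * x ∈ K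

theorem Cov.subset {K S S' : Set G} (h : Cov K S) (hS : S' ⊆ S) : Cov K S' := by
  obtain ⟨T, hT, h⟩ := h
  exact ⟨T, hT, fun x hx => h x (hS hx)⟩

theorem Cov.superset {K K' S : Set G} (h : Cov K S) (hK : K ⊆ K') : Cov K' S := by
  obtain ⟨T, hT, h⟩ := h
  refine ⟨T, hT, fun x hx => ?_⟩
  obtain ⟨g, hg, h⟩ := h x hx
  exact ⟨g, hg, hK h⟩

theorem Cov.union {K S S' : Set G} (h : Cov K S) (h' : Cov K S') : Cov K (S ∪ S') := by
  obtain ⟨T, hT, h⟩ := h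
  obtain ⟨T', hT', h'⟩ := h'
  refine ⟨T ∪ T', hT.union hT', ?_⟩
  rintro x (hx | hx)
  · obtain ⟨g, hg, h⟩ := h x hx
    exact ⟨g, Or.inl hg, h⟩
  · obtain ⟨g, hg, h⟩ := h' x hx
    exact ⟨g, Or.inr hg, h⟩

theorem Cov.trans {K K' S : Set G} (h' : Cov K' K) (h : Cov K S) : Cov K' S := by
  obtain ⟨T, hT, h⟩ := h
  obtain ⟨T', hT', h'⟩ := h'
  refine ⟨Set.image2 (fun a b => a * b) T T', hT.image2 _ hT', fun x hx => ?_⟩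
  obtain ⟨g, hg, h⟩ := h x hx
  obtain ⟨g', hg', h'⟩ := h' _ h
  exact ⟨g * g', ⟨g, hg, g', hg', rfl⟩, by simpa [mul_assoc] using h'⟩

theorem Cov.lmul (g : G) {K S : Set G} (h : Cov K S) : Cov K (lmul g S) := by
  refine Cov.trans h ⟨{g}, Set.finite_singleton g, fun x hx => ⟨g, rfl, mem_lmul.1 hx⟩⟩

theorem Cov.empty (K : Set G) : Cov K ∅ := ⟨∅, Set.finite_empty, by simp⟩

/-- If a map with finite target separates the left cosets of `K` meeting `S`, then `S` meets only
finitely many of them. -/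
theorem Cov.of_finite {K S : Set G} {α : Type*} [Finite α] (f : G → α)
    (h : ∀ x ∈ S, ∀ y ∈ S, f x = f y → x⁻¹ * y ∈ K) : Cov K S := by
  classical
  let r : α → G := fun a => if h : ∃ x ∈ S, f x = a then h.choose else 1
  refine ⟨Set.range r, Set.finite_range r, fun x hx => ⟨r (f x), ⟨_, rfl⟩, ?_⟩⟩
  have hex : ∃ y ∈ S, f y = f x := ⟨x, hx, rfl⟩
  have : r (f x) = hex.choose := dif_pos hex
  rw [this]
  exact h _ hex.choose_spec.1 _ hx hex.choose_spec.2

end Cover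

section Ring

variable {F : Type*} [Field F] {v : F → ℤ × ℤ} {O : Subring F} {t1 t2 : F}

namespace VHyp

/-- `K_{i+1,j}` has finite index in `K_{i,j}`, because two elements of `K_{i,j}` with the same
reductions of `t₁^{-i} t₂^{-j} (g - 1)` lie in the same coset. -/
theorem cov_succ (H : VHyp v O t1 t2) [IsLocalRing ↥O] [Finite (IsLocalRing.ResidueField ↥O)]
    {i j : ℤ} (hp : RLt (0, 0) (i, j)) :
    Cov (Kmat O t1 t2 (i + 1) j) (Kmat O t1 t2 i j) := by
  classical
  let s : F := (t1 ^ i * t2 ^ j)⁻¹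
  let f : GL (Fin 2) F → Fin 2 → Fin 2 → IsLocalRing.ResidueField ↥O := fun x a b =>
    if h : s * ((x : Matrix (Fin 2) (Fin 2) F) a b - (1 : Matrix (Fin 2) (Fin 2) F) a b) ∈ O then
      IsLocalRing.residue O ⟨_, h⟩ else 0
  have hs : ∀ z, VGe v (i, j) z → s * z ∈ O := fun z hz => by
    have : VGe v (-(i, j)) s := by
      right; rw [H.v_inv (H.t_ne i j), H.v_t]; simp [RLex]
    have := H.ge_mul this hz
    rw [neg_add_cancel] at this
    exact H.memO_iff.2 this
  refine Cov.of_finite f fun x hx y hy hxy => ?_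
  have hdiff : MGe v (i + 1, j) ((y : Matrix (Fin 2) (Fin 2) F) - x) := by
    intro a b
    have e := congrFun (congrFun hxy a) b
    have hx' := hs _ (H.mem_K.1 hx a b)
    have hy' := hs _ (H.mem_K.1 hy a b)
    simp only [f, dif_pos hx', dif_pos hy'] at e
    rw [eq_comm, ← sub_eq_zero, ← map_sub, IsLocalRing.residue_eq_zero_iff,
      IsLocalRing.mem_maximalIdeal, mem_nonunits_iff] at e
    have hval : ((⟨_, hy'⟩ - ⟨_, hx'⟩ : ↥O) : F) =
        s * ((y : Matrix (Fin 2) (Fin 2) F) a b - (x : Matrix (Fin 2) (Fin 2) F) a b) := by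
      push_cast; ring
    by_cases h0 : (y : Matrix (Fin 2) (Fin 2) F) a b - (x : Matrix (Fin 2) (Fin 2) F) a b = 0
    · exact Or.inl h0
    have hsne : s ≠ 0 := inv_ne_zero (H.t_ne i j)
    have hm := mul_ne_zero hsne h0
    have hO := (⟨_, hy'⟩ - ⟨_, hx'⟩ : ↥O).2
    rw [hval, H.memO] at hO
    -- a nonunit of `O` has positive valuation
    have hnot : ¬ RLex (v (s * ((y : Matrix (Fin 2) (Fin 2) F) a b
        - (x : Matrix (Fin 2) (Fin 2) F) a b))) (0, 0) := by
      intro hle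
      apply e
      have hinv : (s * ((y : Matrix (Fin 2) (Fin 2) F) a b
          - (x : Matrix (Fin 2) (Fin 2) F) a b))⁻¹ ∈ O := by
        rw [H.memO, H.v_inv hm]
        right
        unfold RLex at *
        simp at *; omega
      refine IsUnit.of_mul_eq_one ⟨_, hinv⟩ ?_
      apply Subtype.ext
      rw [Subring.coe_mul, hval]
      exact mul_inv_cancel₀ hm
    right
    rw [Matrix.sub_apply]
    rw [H.mul _ _ hsne h0, H.v_inv (H.t_ne i j), H.v_t] at hnot
    unfold RLex at *
    simp at *; omega
  rw [H.mem_K']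
  have e : ((x⁻¹ * y : GL (Fin 2) F) : Matrix (Fin 2) (Fin 2) F) - 1 =
      ((x⁻¹ : GL (Fin 2) F) : Matrix (Fin 2) (Fin 2) F) * ((y : Matrix (Fin 2) (Fin 2) F) - x) := by
    rw [mul_sub, ← Units.val_mul, ← Units.val_mul]; simp
  rw [e]
  exact H.mge_mul_left (H.mge_inv_of_K hp hx) hdiff

theorem cov_add (H : VHyp v O t1 t2) [IsLocalRing ↥O] [Finite (IsLocalRing.ResidueField ↥O)]
    {i j : ℤ} (hp : RLt (0, 0) (i, j)) (n : ℕ) :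
    Cov (Kmat O t1 t2 (i + n) j) (Kmat O t1 t2 i j) := by
  induction n with
  | zero =>
    exact ⟨{1}, Set.finite_singleton 1, fun x hx => ⟨1, rfl, by simpa using hx⟩⟩
  | succ n ih =>
    have hp' : RLt (0, 0) (i + n, j) := by unfold RLt at *; simp at *; omega
    have := H.cov_succ hp'
    rw [Nat.cast_succ, ← add_assoc]
    exact this.trans ih

/-! ### Levels of the sets in the ring -/

theorem K_total (H : VHyp v O t1 t2) (i j i' j' : ℤ) :
    Kmat O t1 t2 i' j' ⊆ Kmat O t1 t2 i j ∨ Kmat O t1 t2 i j ⊆ Kmat O t1 t2 i' j' := by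
  by_cases h : RLex (i, j) (i', j')
  · exact Or.inl (H.K_le h)
  · refine Or.inr (H.K_le ?_)
    unfold RLex at *; simp at *; omega

end VHyp

/-- `S` is covered by finitely many cosets of some `K_{i,j}` with the given second index `j`. -/
def Bdd (O : Subring F) (t1 t2 : F) (j : ℤ) (S : Set (GL (Fin 2) F)) : Prop :=
  ∃ i, RLt (0, 0) (i, j) ∧ Cov (Kmat O t1 t2 i j) S

theorem Bdd.subset {j : ℤ} {S S' : Set (GL (Fin 2) F)} (h : Bdd O t1 t2 j S) (hS : S' ⊆ S) :
    Bdd O t1 t2 j S' := by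
  obtain ⟨i, hi, h⟩ := h
  exact ⟨i, hi, h.subset hS⟩

namespace VHyp

theorem bdd_union (H : VHyp v O t1 t2) {j : ℤ} {S S' : Set (GL (Fin 2) F)}
    (h : Bdd O t1 t2 j S) (h' : Bdd O t1 t2 j S') : Bdd O t1 t2 j (S ∪ S') := by
  obtain ⟨i, hi, h⟩ := h
  obtain ⟨i', hi', h'⟩ := h'
  rcases H.K_total i j i' j with hK | hK
  · exact ⟨i, hi, h.union (h'.superset hK)⟩
  · exact ⟨i', hi', (h.superset hK).union h'⟩

theorem bdd_empty {j : ℤ} (hj : 0 ≤ j) : Bdd O t1 t2 j ∅ :=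
  ⟨1, by unfold RLt; simp; omega, Cov.empty _⟩

theorem bdd_mono (H : VHyp v O t1 t2) {j j' : ℤ} {S : Set (GL (Fin 2) F)} (hj : 0 ≤ j)
    (hjj : j ≤ j') (h : Bdd O t1 t2 j' S) : Bdd O t1 t2 j S := by
  obtain ⟨i, hi, h⟩ := h
  rcases hjj.eq_or_lt with rfl | hlt
  · exact ⟨i, hi, h⟩
  · refine ⟨1, by unfold RLt; simp; omega, h.superset (H.K_le ?_)⟩
    left; exact hlt

theorem bdd_coset (g : GL (Fin 2) F) {i j : ℤ} (hp : RLt (0, 0) (i, j)) :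
    Bdd O t1 t2 j (lmul g (Kmat O t1 t2 i j)) :=
  ⟨i, hp, {g}, Set.finite_singleton g, fun _ hx => ⟨g, rfl, mem_lmul.1 hx⟩⟩

theorem bdd_biUnion (H : VHyp v O t1 t2) {j : ℤ} (hj : 0 ≤ j) {T : Set (GL (Fin 2) F)}
    (hT : T.Finite) (f : GL (Fin 2) F → Set (GL (Fin 2) F))
    (h : ∀ g ∈ T, Bdd O t1 t2 j (f g)) : Bdd O t1 t2 j (⋃ g ∈ T, f g) := by
  induction T, hT using Set.Finite.induction_on with
  | empty => simpa using bdd_empty hj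
  | insert _ _ ih =>
    rw [Set.biUnion_insert]
    exact H.bdd_union (h _ (Set.mem_insert _ _))
      (ih fun g hg => h g (Set.mem_insert_of_mem _ hg))

theorem nonneg_of_pos {i j : ℤ} (hp : RLt (0, 0) (i, j)) : 0 ≤ j := by
  unfold RLt at hp; simp at hp; omega

theorem bdd_zero (H : VHyp v O t1 t2) {A : Set (GL (Fin 2) F)} (hA : RMem O t1 t2 A) :
    Bdd O t1 t2 0 A := by
  induction hA with
  | dist D hD =>
    rcases hD with rfl | ⟨g, i, j, hp, rfl⟩
    · exact bdd_empty le_rfl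
    · exact H.bdd_mono le_rfl (nonneg_of_pos hp) (bdd_coset g hp)
  | union A B _ _ ihA ihB => exact H.bdd_union ihA ihB
  | inter A B _ _ ihA ihB => exact ihA.subset Set.inter_subset_left
  | diff A B _ _ ihA ihB => exact ihA.subset Set.sdiff_subset

/-- Every set of the ring is right invariant under a deep enough congruence subgroup. -/
theorem exists_invariant (H : VHyp v O t1 t2) {A : Set (GL (Fin 2) F)} (hA : RMem O t1 t2 A) :
    ∃ i j, RLt (0, 0) (i, j) ∧ ∀ k ∈ Kmat O t1 t2 i j, ∀ x, x * k ∈ A ↔ x ∈ A := by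
  have comb : ∀ A B : Set (GL (Fin 2) F),
      (∃ i j, RLt (0, 0) (i, j) ∧ ∀ k ∈ Kmat O t1 t2 i j, ∀ x, x * k ∈ A ↔ x ∈ A) →
      (∃ i j, RLt (0, 0) (i, j) ∧ ∀ k ∈ Kmat O t1 t2 i j, ∀ x, x * k ∈ B ↔ x ∈ B) →
      ∃ i j, RLt (0, 0) (i, j) ∧ ∀ k ∈ Kmat O t1 t2 i j, ∀ x,
        (x * k ∈ A ↔ x ∈ A) ∧ (x * k ∈ B ↔ x ∈ B) := by
    rintro A B ⟨i, j, hp, h⟩ ⟨i', j', hp', h'⟩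
    rcases H.K_total i j i' j' with hK | hK
    · exact ⟨i', j', hp', fun k hk x => ⟨h k (hK hk) x, h' k hk x⟩⟩
    · exact ⟨i, j, hp, fun k hk x => ⟨h k hk x, h' k (hK hk) x⟩⟩
  induction hA with
  | dist D hD =>
    rcases hD with rfl | ⟨g, i, j, hp, rfl⟩
    · exact ⟨1, 0, by simp [RLt], by simp⟩
    · refine ⟨i, j, hp, fun k hk x => ?_⟩
      rw [mem_lmul, mem_lmul, ← mul_assoc]
      refine ⟨fun h => ?_, fun h => H.K_mul hp h hk⟩
      simpa using H.K_mul hp h (H.K_inv hp hk)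
  | union A B _ _ ihA ihB =>
    obtain ⟨i, j, hp, h⟩ := comb A B ihA ihB
    exact ⟨i, j, hp, fun k hk x => or_congr (h k hk x).1 (h k hk x).2⟩
  | inter A B _ _ ihA ihB =>
    obtain ⟨i, j, hp, h⟩ := comb A B ihA ihB
    exact ⟨i, j, hp, fun k hk x => and_congr (h k hk x).1 (h k hk x).2⟩
  | diff A B _ _ ihA ihB =>
    obtain ⟨i, j, hp, h⟩ := comb A B ihA ihB
    exact ⟨i, j, hp, fun k hk x => and_congr (h k hk x).1 (not_congr (h k hk x).2)⟩

/-- Dichotomy: once `i` is large, every coset of `K_{i,j}` is contained in `A`, or disjoint from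
`A`, up to a set covered by finitely many cosets of second index `j + 1`. -/
theorem dichotomy (H : VHyp v O t1 t2) {A : Set (GL (Fin 2) F)} (hA : RMem O t1 t2 A)
    (j : ℤ) (hj : 0 ≤ j) : ∃ i0, ∀ i ≥ i0, RLt (0, 0) (i, j) → ∀ g,
      Bdd O t1 t2 (j + 1) (lmul g (Kmat O t1 t2 i j) ∩ A) ∨
      Bdd O t1 t2 (j + 1) (lmul g (Kmat O t1 t2 i j) \ A) := by
  have hj1 : 0 ≤ j + 1 := by omega
  induction hA with
  | dist D hD =>
    rcases hD with rfl | ⟨g1, i1, j1, hp1, rfl⟩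
    · exact ⟨0, fun i _ _ g => Or.inl (by simpa using bdd_empty hj1)⟩
    by_cases hjj : j + 1 ≤ j1
    · exact ⟨0, fun i _ _ g => Or.inl
        ((H.bdd_mono hj1 hjj (bdd_coset g1 hp1)).subset Set.inter_subset_right)⟩
    refine ⟨i1, fun i hi hp g => ?_⟩
    have hK : Kmat O t1 t2 i j ⊆ Kmat O t1 t2 i1 j1 := H.K_le (by unfold RLex; simp; omega)
    by_cases hne : (lmul g (Kmat O t1 t2 i j) ∩ lmul g1 (Kmat O t1 t2 i1 j1)).Nonempty
    · right
      obtain ⟨y, hy, hy1⟩ := hne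
      rw [Set.sdiff_eq_empty.2]
      · exact bdd_empty hj1
      intro x hx
      rw [mem_lmul] at *
      have := H.K_mul hp1 hy1 (H.K_mul hp1 (H.K_inv hp1 (hK hy)) (hK hx))
      simpa [mul_assoc] using this
    · left
      rw [Set.not_nonempty_iff_eq_empty.1 hne]
      exact bdd_empty hj1
  | union A B _ _ ihA ihB =>
    obtain ⟨i, hi⟩ := ihA
    obtain ⟨i', hi'⟩ := ihB
    refine ⟨max i i', fun k hk hp g => ?_⟩
    rcases hi k (by omega) hp g with h | h
    · rcases hi' k (by omega) hp g with h' | h'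
      · left; rw [Set.inter_union_distrib_left]; exact H.bdd_union h h'
      · right; exact h'.subset (Set.sdiff_subset_sdiff_right Set.subset_union_right)
    · right; exact h.subset (Set.sdiff_subset_sdiff_right Set.subset_union_left)
  | inter A B _ _ ihA ihB =>
    obtain ⟨i, hi⟩ := ihA
    obtain ⟨i', hi'⟩ := ihB
    refine ⟨max i i', fun k hk hp g => ?_⟩
    rcases hi k (by omega) hp g with h | h
    · left; exact h.subset (Set.inter_subset_inter_right _ Set.inter_subset_left)
    · rcases hi' k (by omega) hp g with h' | h'
      · left; exact h'.subset (Set.inter_subset_inter_right _ Set.inter_subset_right)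
      · right; rw [Set.sdiff_inter]; exact H.bdd_union h h'
  | diff A B _ _ ihA ihB =>
    obtain ⟨i, hi⟩ := ihA
    obtain ⟨i', hi'⟩ := ihB
    refine ⟨max i i', fun k hk hp g => ?_⟩
    rcases hi k (by omega) hp g with h | h
    · left; exact h.subset (Set.inter_subset_inter_right _ Set.sdiff_subset)
    · rcases hi' k (by omega) hp g with h' | h'
      · right
        refine (H.bdd_union h h').subset ?_
        rintro x ⟨hx, hx'⟩
        by_cases hA : x ∈ A
        · exact Or.inr ⟨hx, by_contra fun hB => hx' ⟨hA, hB⟩⟩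
        · exact Or.inl ⟨hx, hA⟩
      · left
        refine h'.subset ?_
        rintro x ⟨hx, hx'⟩
        exact ⟨hx, hx'.2⟩

end VHyp

end Ring

/-! ### Level of a set and right translation by diagonal matrices -/

/-- The right translate `A h` of a subset of a group. -/
def rmul {G : Type*} [Group G] (h : G) (A : Set G) : Set G := (fun x => x * h) '' A

theorem mem_rmul {G : Type*} [Group G] {h x : G} {A : Set G} : x ∈ rmul h A ↔ x * h⁻¹ ∈ A := by
  unfold rmul
  constructor
  · rintro ⟨y, hy, rfl⟩; simpa using hy
  · intro h; exact ⟨_, h, by simp⟩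

section Level

variable {F : Type*} [Field F] {v : F → ℤ × ℤ} {O : Subring F} {t1 t2 : F}

/-- The elementary unipotent matrix `1 + x E_{ab}` as an element of `GL₂(F)`. -/
def unip {a b : Fin 2} (hab : a ≠ b) (x : F) : GL (Fin 2) F :=
  ⟨transvection a b x, transvection a b (-x), by
    rw [transvection_mul_transvection_same _ _ hab]; simp, by
    rw [transvection_mul_transvection_same _ _ hab]; simp⟩

theorem unip_coe {a b : Fin 2} (hab : a ≠ b) (x : F) :
    (unip hab x : Matrix (Fin 2) (Fin 2) F) = transvection a b x := rfl

theorem unip_inv_mul {a b : Fin 2} (hab : a ≠ b) (x y : F) :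
    (unip hab x)⁻¹ * unip hab y = unip hab (y - x) := by
  rw [inv_mul_eq_iff_eq_mul]
  apply Units.ext
  rw [Units.val_mul, unip_coe, unip_coe, unip_coe, transvection_mul_transvection_same _ _ hab]
  simp

/-- Pigeonhole: infinitely many elements cannot be distributed over finitely many cosets of two
kinds without two of them sharing a coset. -/
theorem pigeon {G : Type*} [Group G] (y z : ℕ → G) {T1 T2 : Set G} (h1 : T1.Finite)
    (h2 : T2.Finite) {K1 K2 : Set G}
    (h : ∀ n, (∃ g ∈ T1, g⁻¹ * y n ∈ K1) ∨ (∃ g ∈ T2, g⁻¹ * z n ∈ K2)) :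
    ∃ n m, n ≠ m ∧ ((∃ g, g⁻¹ * y n ∈ K1 ∧ g⁻¹ * y m ∈ K1) ∨
      (∃ g, g⁻¹ * z n ∈ K2 ∧ g⁻¹ * z m ∈ K2)) := by
  have := h1.to_subtype
  have := h2.to_subtype
  have h' : ∀ n, ∃ s : T1 ⊕ T2, (∀ g, s = Sum.inl g → (g : G)⁻¹ * y n ∈ K1) ∧
      (∀ g, s = Sum.inr g → (g : G)⁻¹ * z n ∈ K2) := by
    intro n
    rcases h n with ⟨g, hg, hK⟩ | ⟨g, hg, hK⟩
    · refine ⟨Sum.inl ⟨g, hg⟩, ?_, by simp⟩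
      intro g' e; cases e; exact hK
    · refine ⟨Sum.inr ⟨g, hg⟩, by simp, ?_⟩
      intro g' e; cases e; exact hK
  choose s hs1 hs2 using h'
  obtain ⟨n, m, hnm, e⟩ := Finite.exists_ne_map_eq_of_infinite s
  refine ⟨n, m, hnm, ?_⟩
  rcases hsn : s n with g | g
  · exact Or.inl ⟨g, hs1 n g hsn, hs1 m g (e ▸ hsn)⟩
  · exact Or.inr ⟨g, hs2 n g hsn, hs2 m g (e ▸ hsn)⟩

namespace VHyp

theorem unip_mem (H : VHyp v O t1 t2) {a b : Fin 2} (hab : a ≠ b) {i j : ℤ} {x : F}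
    (hx : VGe v (i, j) x) : unip hab x ∈ Kmat O t1 t2 i j := by
  rw [H.mem_K]
  intro c d
  rw [unip_coe, transvection, Matrix.add_apply, add_sub_cancel_left, Matrix.single_apply]
  split_ifs
  · exact hx
  · exact VGe.zero _

theorem ge_of_unip_mem (H : VHyp v O t1 t2) {a b : Fin 2} (hab : a ≠ b) {i j : ℤ} {x : F}
    (hx : unip hab x ∈ Kmat O t1 t2 i j) : VGe v (i, j) x := by
  have := H.mem_K.1 hx a b
  simpa [unip_coe, transvection] using this

theorem diag_ne {d : GL (Fin 2) F} (hd : ∀ a b, a ≠ b → (d : Matrix (Fin 2) (Fin 2) F) a b = 0)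
    (a : Fin 2) : (d : Matrix (Fin 2) (Fin 2) F) a a ≠ 0 := by
  have h : (d : Matrix (Fin 2) (Fin 2) F).det ≠ 0 :=
    ((Matrix.isUnit_iff_isUnit_det _).1 d.isUnit).ne_zero
  rw [Matrix.det_fin_two, hd 0 1 (by decide)] at h
  intro h0
  fin_cases a <;> simp at h0 <;> simp [h0] at h

/-- Conjugation by a diagonal matrix rescales each entry. -/
theorem diag_conj {d : GL (Fin 2) F}
    (hd : ∀ a b, a ≠ b → (d : Matrix (Fin 2) (Fin 2) F) a b = 0)
    (M : Matrix (Fin 2) (Fin 2) F) (a b : Fin 2) :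
    (((d⁻¹ : GL (Fin 2) F) : Matrix (Fin 2) (Fin 2) F) * M * d) a b =
      ((d : Matrix (Fin 2) (Fin 2) F) a a)⁻¹ * M a b * (d : Matrix (Fin 2) (Fin 2) F) b b := by
  have e : (d : Matrix (Fin 2) (Fin 2) F) *
      (((d⁻¹ : GL (Fin 2) F) : Matrix (Fin 2) (Fin 2) F) * M * d) = M * d := by
    rw [← mul_assoc, ← mul_assoc, ← Units.val_mul]; simp
  have e' := congrFun (congrFun e a) b
  rw [Matrix.mul_apply, Matrix.mul_apply (M := M), Finset.sum_eq_single a, Finset.sum_eq_single b] at e'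
  · rw [mul_assoc (_)⁻¹, ← e', inv_mul_cancel_left₀ (diag_ne hd a)]
  · intro c _ hc; rw [hd c b hc, mul_zero]
  · simp
  · intro c _ hc; rw [hd a c hc.symm, zero_mul]
  · simp

theorem diag_inv {d : GL (Fin 2) F}
    (hd : ∀ a b, a ≠ b → (d : Matrix (Fin 2) (Fin 2) F) a b = 0) (a b : Fin 2) :
    ((d⁻¹ : GL (Fin 2) F) : Matrix (Fin 2) (Fin 2) F) a b =
      if a = b then ((d : Matrix (Fin 2) (Fin 2) F) a a)⁻¹ else 0 := by
  have h : ((d⁻¹ : GL (Fin 2) F) : Matrix (Fin 2) (Fin 2) F) =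
      Matrix.diagonal fun a => ((d : Matrix (Fin 2) (Fin 2) F) a a)⁻¹ := by
    have h1 : (d : Matrix (Fin 2) (Fin 2) F) =
        Matrix.diagonal fun a => (d : Matrix (Fin 2) (Fin 2) F) a a := by
      ext a b
      by_cases hab : a = b
      · subst hab; simp
      · rw [hd a b hab, Matrix.diagonal_apply_ne _ hab]
    rw [Matrix.coe_units_inv]
    apply Matrix.inv_eq_right_inv
    conv_lhs => rw [h1]
    rw [Matrix.diagonal_mul_diagonal, ← Matrix.diagonal_one]
    congr 1
    funext a
    simpa using mul_inv_cancel₀ (diag_ne hd a)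
  rw [h, Matrix.diagonal_apply]

/-- If `A` contains a coset of `K_{i,j}` up to a set of higher level, and the translate `A d` by a
diagonal matrix is bounded at level `j'`, then `j'` is bounded by `j` corrected by the rescaling
that conjugation by `d` induces on the unipotent subgroup of index `(a, b)`. -/
theorem level_le (H : VHyp v O t1 t2) {A : Set (GL (Fin 2) F)} {g d : GL (Fin 2) F} {i j j' : ℤ}
    (hd : ∀ a b, a ≠ b → (d : Matrix (Fin 2) (Fin 2) F) a b = 0)
    (hA : Bdd O t1 t2 (j + 1) (lmul g (Kmat O t1 t2 i j) \ A))
    (hAd : Bdd O t1 t2 j' (rmul d A)) {a b : Fin 2} (hab : a ≠ b) :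
    j' + (v ((d : Matrix (Fin 2) (Fin 2) F) a a)).2
      ≤ j + (v ((d : Matrix (Fin 2) (Fin 2) F) b b)).2 := by
  obtain ⟨i1, hp1, T1, hT1, h1⟩ := hA
  obtain ⟨i2, hp2, T2, hT2, h2⟩ := hAd
  let x : ℕ → F := fun n => t1 ^ (i + n) * t2 ^ j
  let y : ℕ → GL (Fin 2) F := fun n => g * unip hab (x n)
  -- The elements `x n` have pairwise differences of second valuation exactly `j`.
  have hlt : ∀ n m, n < m → x m - x n ≠ 0 ∧ (v (x m - x n)).2 = j := by
    intro n m hnm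
    have e : x m - x n = x n * -(1 + -(t1 ^ ((m : ℤ) - n))) := by
      have : t1 ^ (i + m) = t1 ^ (i + n) * t1 ^ ((m : ℤ) - n) := by
        rw [← zpow_add₀ H.t1_ne]; congr 1; ring
      simp only [x, this]; ring
    have hge : VGe v (1, 0) (-(t1 ^ ((m : ℤ) - n))) := by
      apply H.ge_neg
      right; rw [H.v_zpow H.t1_ne, H.vt1]; simp [RLex]; omega
    obtain ⟨hne, hv⟩ := H.v_one_add (by simp [RLt]) hge
    have hxn : x n ≠ 0 := H.t_ne _ _
    refine ⟨?_, ?_⟩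
    · rw [e]; exact mul_ne_zero hxn (neg_ne_zero.2 hne)
    · rw [e, H.mul _ _ hxn (neg_ne_zero.2 hne), H.v_neg, hv, H.v_t]; simp
  have hx : ∀ n m, n ≠ m → x m - x n ≠ 0 ∧ (v (x m - x n)).2 = j := by
    intro n m hnm
    rcases lt_or_gt_of_ne hnm with h | h
    · exact hlt n m h
    · rw [← neg_sub, H.v_neg, neg_ne_zero]; exact hlt m n h
  obtain ⟨n, m, hnm, h⟩ := pigeon (K1 := Kmat O t1 t2 i1 (j + 1)) (K2 := Kmat O t1 t2 i2 j')
    y (fun n => y n * d) hT1 hT2 fun n => by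
      by_cases hy : y n ∈ A
      · right
        exact h2 _ (mem_rmul.2 (by simpa using hy))
      · left
        refine h1 _ ⟨mem_lmul.2 ?_, hy⟩
        rw [inv_mul_cancel_left]
        refine H.unip_mem hab (Or.inr ?_)
        rw [H.v_t]; simp [RLex]
  obtain ⟨hz, hvz⟩ := hx n m hnm
  rcases h with ⟨g', ha, hb⟩ | ⟨g', ha, hb⟩
  · exfalso
    have hK := H.K_mul hp1 (H.K_inv hp1 ha) hb
    have e : (g'⁻¹ * y n)⁻¹ * (g'⁻¹ * y m) = unip hab (x m - x n) := by
      rw [← unip_inv_mul]; simp only [y]; group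
    rw [e] at hK
    have := (H.ge_of_unip_mem hab hK).resolve_left hz
    unfold RLex at this; simp at this; omega
  · have hK := H.K_mul hp2 (H.K_inv hp2 ha) hb
    have e : (g'⁻¹ * (y n * d))⁻¹ * (g'⁻¹ * (y m * d)) = d⁻¹ * unip hab (x m - x n) * d := by
      rw [← unip_inv_mul]; simp only [y]; group
    rw [e] at hK
    have := H.mem_K.1 hK a b
    rw [Units.val_mul, Units.val_mul, diag_conj hd, Matrix.one_apply_ne hab, sub_zero, unip_coe,
      transvection, Matrix.add_apply, Matrix.one_apply_ne hab, Matrix.single_apply_same,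
      zero_add] at this
    have hda := diag_ne hd a
    have hdb := diag_ne hd b
    have := this.resolve_left (mul_ne_zero (mul_ne_zero (inv_ne_zero hda) hz) hdb)
    rw [H.mul _ _ (mul_ne_zero (inv_ne_zero hda) hz) hdb, H.mul _ _ (inv_ne_zero hda) hz,
      H.v_inv hda] at this
    unfold RLex at this; simp at this; omega

/-- Every nonempty set of the ring has a level `j`: it is covered by finitely many cosets of level
`j`, and contains a coset of level `j` up to a set of higher level. -/
theorem exists_level (H : VHyp v O t1 t2) [IsLocalRing ↥O]
    [Finite (IsLocalRing.ResidueField ↥O)] {A : Set (GL (Fin 2) F)} (hA : RMem O t1 t2 A)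
    (hne : A.Nonempty) : ∃ j, Bdd O t1 t2 j A ∧ ∃ i g,
      Bdd O t1 t2 (j + 1) (lmul g (Kmat O t1 t2 i j) \ A) := by
  by_contra hcon
  push Not at hcon
  have hall : ∀ n : ℕ, Bdd O t1 t2 n A := by
    intro n
    induction n with
    | zero => exact H.bdd_zero hA
    | succ n ih =>
      push_cast
      obtain ⟨i, hp, hcov⟩ := ih
      have hno := hcon n ⟨i, hp, hcov⟩
      obtain ⟨i0, hi0⟩ := H.dichotomy hA n (by omega)
      have hcov' := (H.cov_add hp (i0 - i).toNat).trans hcov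
      have hp' : RLt (0, 0) (i + ((i0 - i).toNat : ℤ), (n : ℤ)) := by
        unfold RLt at *; simp only at *; omega
      obtain ⟨T, hT, hcov'⟩ := hcov'
      have := H.bdd_biUnion (j := n + 1) (by omega) hT
        (fun g => lmul g (Kmat O t1 t2 (i + ((i0 - i).toNat : ℤ)) n) ∩ A)
        (fun g _ => (hi0 _ (by omega) hp' g).resolve_right (hno _ g))
      refine this.subset fun x hx => ?_
      obtain ⟨g, hg, h⟩ := hcov' x hx
      exact Set.mem_biUnion hg ⟨mem_lmul.2 h, hx⟩
  obtain ⟨i, j, hp, hinv⟩ := H.exists_invariant hA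
  obtain ⟨g, hg⟩ := hne
  have hj := nonneg_of_pos hp
  have h1 : lmul g (Kmat O t1 t2 i j) \ A = ∅ := by
    rw [Set.sdiff_eq_empty]
    intro x hx
    have := (hinv _ (mem_lmul.1 hx) g).2 hg
    simpa using this
  have h2 := hall (j + 1).toNat
  rw [Int.toNat_of_nonneg (by omega)] at h2
  exact hcon j (H.bdd_mono hj (by omega) h2) i g (h1 ▸ bdd_empty (by omega))

/-- A nonempty set of the ring and its translate by a diagonal matrix `d` can both lie in the ring
only if the diagonal entries of `d` have the same second valuation. -/
theorem diag_level (H : VHyp v O t1 t2) [IsLocalRing ↥O]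
    [Finite (IsLocalRing.ResidueField ↥O)] {A : Set (GL (Fin 2) F)} (hA : RMem O t1 t2 A)
    (hne : A.Nonempty) {d : GL (Fin 2) F}
    (hd : ∀ a b, a ≠ b → (d : Matrix (Fin 2) (Fin 2) F) a b = 0)
    (hAd : RMem O t1 t2 (rmul d A)) :
    (v ((d : Matrix (Fin 2) (Fin 2) F) 0 0)).2 = (v ((d : Matrix (Fin 2) (Fin 2) F) 1 1)).2 := by
  obtain ⟨j, hb, i, g, hs⟩ := H.exists_level hA hne
  obtain ⟨j', hb', i', g', hs'⟩ := H.exists_level hAd (hne.image _)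
  have hinv := diag_inv hd
  have hd' : ∀ a b, a ≠ b → ((d⁻¹ : GL (Fin 2) F) : Matrix (Fin 2) (Fin 2) F) a b = 0 :=
    fun a b hab => by rw [hinv, if_neg hab]
  have hback : rmul d⁻¹ (rmul d A) = A := by
    ext x; simp [mem_rmul]
  have a1 := H.level_le hd hs hb' (a := 0) (b := 1) (by decide)
  have a2 := H.level_le hd hs hb' (a := 1) (b := 0) (by decide)
  have a3 := H.level_le hd' hs' (hback.symm ▸ hb) (a := 0) (b := 1) (by decide)
  have a4 := H.level_le hd' hs' (hback.symm ▸ hb) (a := 1) (b := 0) (by decide)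
  simp only [hinv, if_true, H.v_inv (diag_ne hd _), Prod.snd_neg] at a3 a4
  omega

end VHyp

end Level

/-! ### Cartan decomposition -/

section Cartan

variable {F : Type*} [Field F] {v : F → ℤ × ℤ} {O : Subring F} {t1 t2 : F}

/-- The permutation matrix swapping the two coordinates. -/
def swapGL (F : Type*) [Field F] : GL (Fin 2) F :=
  ⟨!![0, 1; 1, 0], !![0, 1; 1, 0], by simp [Matrix.one_fin_two], by simp [Matrix.one_fin_two]⟩

theorem swapGL_coe : (swapGL F : Matrix (Fin 2) (Fin 2) F) = !![0, 1; 1, 0] := rfl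

theorem swapGL_inv : (swapGL F)⁻¹ = swapGL F := by
  rw [inv_eq_iff_mul_eq_one]; apply Units.ext
  rw [Units.val_mul, swapGL_coe]; simp [Matrix.one_fin_two]

theorem unip_inv {a b : Fin 2} (hab : a ≠ b) (x : F) : (unip hab x)⁻¹ = unip hab (-x) := by
  have h := unip_inv_mul hab x 0
  have h0 : unip hab (0 : F) = 1 := by apply Units.ext; simp [unip_coe]
  rwa [h0, mul_one, zero_sub] at h

namespace VHyp

theorem swap_mem (H : VHyp v O t1 t2) : swapGL F ∈ GLO O := by
  rw [H.mem_GLO, swapGL_inv, and_self, swapGL_coe]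
  intro a b
  fin_cases a <;> fin_cases b
  · exact VGe.zero _
  · exact H.ge_one
  · exact H.ge_one
  · exact VGe.zero _

theorem unip_GLO (H : VHyp v O t1 t2) {a b : Fin 2} (hab : a ≠ b) {x : F} (hx : VGe v 0 x) :
    unip hab x ∈ GLO O := by
  have key : ∀ y : F, VGe v 0 y → MGe v 0 (unip hab y : Matrix (Fin 2) (Fin 2) F) := by
    intro y hy
    rw [unip_coe, transvection]
    refine H.mge_add H.mge_one fun c d => ?_
    rw [Matrix.single_apply]
    split_ifs
    · exact hy
    · exact VGe.zero _
  rw [H.mem_GLO, unip_inv]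
  exact ⟨key _ hx, key _ (H.ge_neg hx)⟩

/-- Divisibility in the valuation ring is total. -/
theorem dvd_total (H : VHyp v O t1 t2) (x y : F) :
    (∃ c, VGe v 0 c ∧ y = c * x) ∨ (∃ c, VGe v 0 c ∧ x = c * y) := by
  by_cases hx : x = 0
  · exact Or.inr ⟨0, VGe.zero _, by simp [hx]⟩
  by_cases hy : y = 0
  · exact Or.inl ⟨0, VGe.zero _, by simp [hy]⟩
  by_cases h : RLex (v x) (v y)
  · refine Or.inl ⟨y * x⁻¹, Or.inr ?_, by rw [inv_mul_cancel_right₀ hx]⟩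
    rw [H.mul _ _ hy (inv_ne_zero hx), H.v_inv hx]
    unfold RLex at *; simp; omega
  · refine Or.inr ⟨x * y⁻¹, Or.inr ?_, by rw [inv_mul_cancel_right₀ hy]⟩
    rw [H.mul _ _ hx (inv_ne_zero hy), H.v_inv hy]
    unfold RLex at *; simp; omega

/-- `h` has a Cartan decomposition: it is diagonal up to `GL₂(O_F)` on both sides. -/
def _root_.HasCartan (O : Subring F) (h : GL (Fin 2) F) : Prop :=
  ∃ k1 ∈ GLO O, ∃ k2 ∈ GLO O, ∃ d : GL (Fin 2) F,
    (∀ a b, a ≠ b → (d : Matrix (Fin 2) (Fin 2) F) a b = 0) ∧ h = k1 * d * k2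

theorem cartan_of_min (H : VHyp v O t1 t2) {h : GL (Fin 2) F} {x y : F} (hx : VGe v 0 x)
    (hy : VGe v 0 y) (h10 : (h : Matrix (Fin 2) (Fin 2) F) 1 0 = x * h 0 0)
    (h01 : (h : Matrix (Fin 2) (Fin 2) F) 0 1 = y * h 0 0) : HasCartan O h := by
  refine ⟨unip (show (1 : Fin 2) ≠ 0 by decide) x, H.unip_GLO _ hx,
    unip (show (0 : Fin 2) ≠ 1 by decide) y, H.unip_GLO _ hy,
    (unip (show (1 : Fin 2) ≠ 0 by decide) x)⁻¹ * h *
      (unip (show (0 : Fin 2) ≠ 1 by decide) y)⁻¹, ?_, by group⟩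
  intro a b hab
  rw [unip_inv, unip_inv, Units.val_mul, Units.val_mul, unip_coe, unip_coe]
  fin_cases a <;> fin_cases b
  · simp at hab
  · simp [Matrix.mul_apply, Fin.sum_univ_two, transvection, h01, Matrix.single_apply]; ring
  · simp [Matrix.mul_apply, Fin.sum_univ_two, transvection, h10, Matrix.single_apply]
  · simp at hab

theorem cartan_left (H : VHyp v O t1 t2) {h : GL (Fin 2) F} (hc : HasCartan O (swapGL F * h)) :
    HasCartan O h := by
  obtain ⟨k1, hk1, k2, hk2, d, hd, e⟩ := hc
  refine ⟨(swapGL F)⁻¹ * k1, H.GLO_mul (H.GLO_inv H.swap_mem) hk1, k2, hk2, d, hd, ?_⟩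
  rw [mul_assoc, mul_assoc, ← mul_assoc k1, ← e]; group

theorem cartan_right (H : VHyp v O t1 t2) {h : GL (Fin 2) F} (hc : HasCartan O (h * swapGL F)) :
    HasCartan O h := by
  obtain ⟨k1, hk1, k2, hk2, d, hd, e⟩ := hc
  refine ⟨k1, hk1, k2 * (swapGL F)⁻¹, H.GLO_mul hk2 (H.GLO_inv H.swap_mem), d, hd, ?_⟩
  rw [← mul_assoc, ← e]; group

theorem cartan (H : VHyp v O t1 t2) (h : GL (Fin 2) F) : HasCartan O h := by
  -- the case where, in both columns, the top entry divides the bottom entry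
  have key : ∀ h : GL (Fin 2) F, (∃ x, VGe v 0 x ∧
      (h : Matrix (Fin 2) (Fin 2) F) 1 0 = x * h 0 0) →
      (∃ x, VGe v 0 x ∧ (h : Matrix (Fin 2) (Fin 2) F) 1 1 = x * h 0 1) → HasCartan O h := by
    rintro h ⟨x, hx, h10⟩ ⟨z, hz, h11⟩
    rcases H.dvd_total ((h : Matrix (Fin 2) (Fin 2) F) 0 0) (h 0 1) with ⟨y, hy, e⟩ | ⟨y, hy, e⟩
    · exact H.cartan_of_min hx hy h10 e
    · refine H.cartan_right (H.cartan_of_min hz hy ?_ ?_) <;>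
        rw [Units.val_mul, swapGL_coe] <;> simp [Matrix.mul_apply, Fin.sum_univ_two, h11, e]
  -- the case where the entry at the top left divides the one below it
  have key2 : ∀ h : GL (Fin 2) F, (∃ x, VGe v 0 x ∧
      (h : Matrix (Fin 2) (Fin 2) F) 1 0 = x * h 0 0) → HasCartan O h := by
    rintro h ⟨x, hx, h10⟩
    rcases H.dvd_total ((h : Matrix (Fin 2) (Fin 2) F) 0 1) (h 1 1) with ⟨z, hz, e⟩ | ⟨z, hz, e⟩
    · exact key h ⟨x, hx, h10⟩ ⟨z, hz, e⟩
    rcases H.dvd_total ((h : Matrix (Fin 2) (Fin 2) F) 0 0) (h 1 1) with ⟨y, hy, e'⟩ | ⟨y, hy, e'⟩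
    · exact H.cartan_of_min hx (H.ge_mul_left hz hy) h10 (by rw [e, e', mul_assoc])
    · -- here the entry at the bottom right is the smallest
      refine H.cartan_left (H.cartan_right (H.cartan_of_min (x := z) (y := x * y) hz
        (H.ge_mul_left hx hy) ?_ ?_)) <;>
        rw [Units.val_mul, Units.val_mul, swapGL_coe] <;>
        simp [Matrix.mul_apply, Matrix.vecMul, dotProduct, Fin.sum_univ_two, h10, e, e', mul_assoc]
  rcases H.dvd_total ((h : Matrix (Fin 2) (Fin 2) F) 0 0) (h 1 0) with hx | ⟨x, hx, e⟩
  · exact key2 h hx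
  · refine H.cartan_left (key2 _ ⟨x, hx, ?_⟩)
    rw [Units.val_mul, swapGL_coe]; simp [Matrix.mul_apply, Fin.sum_univ_two, e]

end VHyp

end Cartan

/-! ### Finitely additive functions on the ring -/

/-- The smallest collection containing `P` and closed under disjoint unions and proper
differences. -/
inductive Lam {α : Type*} (P : Set α → Prop) : Set α → Prop
  | basic (A : Set α) : P A → Lam P A
  | union (A B : Set α) : Lam P A → Lam P B → Disjoint A B → Lam P (A ∪ B)
  | diff (A B : Set α) : Lam P A → Lam P B → B ⊆ A → Lam P (A \ B)

/-- Dynkin's argument: if `P` is stable under intersections, so is `Lam P`. -/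
theorem Lam.inter {α : Type*} {P : Set α → Prop} (hP : ∀ A B, P A → P B → P (A ∩ B))
    {A B : Set α} (hA : Lam P A) (hB : Lam P B) : Lam P (A ∩ B) := by
  have step : ∀ C : Set α, (∀ A, P A → Lam P (A ∩ C)) → ∀ A, Lam P A → Lam P (A ∩ C) := by
    intro C hC A hA
    induction hA with
    | basic A h => exact hC A h
    | union A B _ _ hd ihA ihB =>
      rw [Set.union_inter_distrib_right]
      exact .union _ _ ihA ihB (hd.mono Set.inter_subset_left Set.inter_subset_left)
    | diff A B _ _ hd ihA ihB =>
      have e : A \ B ∩ C = (A ∩ C) \ (B ∩ C) := by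
        ext x; simp only [Set.mem_inter_iff, Set.mem_sdiff]; tauto
      rw [e]
      exact .diff _ _ ihA ihB (Set.inter_subset_inter_left _ hd)
  refine step B (fun D hD => ?_) A hA
  rw [Set.inter_comm]
  exact step D (fun E hE => .basic _ (hP _ _ hE hD)) B hB

section Additive

variable {F : Type*} [Field F] {v : F → ℤ × ℤ} {O : Subring F} {t1 t2 : F}

/-- Finite additivity on the ring `ℛ`. -/
def AddOn (O : Subring F) (t1 t2 : F) (f : Set (GL (Fin 2) F) → LaurentSeries ℝ) : Prop :=
  ∀ A B, RMem O t1 t2 A → RMem O t1 t2 B → Disjoint A B → f (A ∪ B) = f A + f B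

theorem rmem_empty : RMem O t1 t2 ∅ := .dist _ (Or.inl rfl)

theorem rmem_coset (g : GL (Fin 2) F) {i j : ℤ} (hp : RLt (0, 0) (i, j)) :
    RMem O t1 t2 (lmul g (Kmat O t1 t2 i j)) := .dist _ (Or.inr ⟨g, i, j, hp, rfl⟩)

theorem lmul_one' {G : Type*} [Group G] (A : Set G) : lmul 1 A = A := by
  ext x; simp [mem_lmul]

theorem lmul_lmul {G : Type*} [Group G] (g k : G) (A : Set G) :
    lmul g (lmul k A) = lmul (g * k) A := by
  ext x; simp [mem_lmul, mul_assoc]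

theorem rmem_K {i j : ℤ} (hp : RLt (0, 0) (i, j)) : RMem O t1 t2 (Kmat O t1 t2 i j) := by
  have := rmem_coset (O := O) (t1 := t1) (t2 := t2) 1 hp
  rwa [lmul_one'] at this

theorem AddOn.empty {f : Set (GL (Fin 2) F) → LaurentSeries ℝ} (hf : AddOn O t1 t2 f) :
    f ∅ = 0 := by
  have := hf ∅ ∅ rmem_empty rmem_empty (by simp)
  simpa using this

theorem rmem_lmul (g : GL (Fin 2) F) {A : Set (GL (Fin 2) F)} (hA : RMem O t1 t2 A) :
    RMem O t1 t2 (lmul g A) := by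
  have hinj : Function.Injective fun x : GL (Fin 2) F => g * x := mul_right_injective g
  induction hA with
  | dist D hD =>
    rcases hD with rfl | ⟨k, i, j, hp, rfl⟩
    · simpa [lmul] using rmem_empty
    · rw [lmul_lmul]; exact rmem_coset _ hp
  | union A B _ _ ihA ihB => unfold lmul at *; rw [Set.image_union]; exact .union _ _ ihA ihB
  | inter A B _ _ ihA ihB => unfold lmul at *; rw [Set.image_inter hinj]; exact .inter _ _ ihA ihB
  | diff A B _ _ ihA ihB => unfold lmul at *; rw [Set.image_sdiff hinj]; exact .diff _ _ ihA ihB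

theorem rmul_lmul {G : Type*} [Group G] (g h : G) (A : Set G) :
    rmul h (lmul g A) = lmul g (rmul h A) := by
  ext x; simp [mem_lmul, mem_rmul, mul_assoc]

theorem rmul_rmul {G : Type*} [Group G] (g h : G) (A : Set G) :
    rmul h (rmul g A) = rmul (g * h) A := by
  ext x; simp [mem_rmul, mul_assoc]

/-- Right translation by `h` preserves the ring if it sends each `K_{i,j}` into the ring. -/
theorem rmem_rmul {h : GL (Fin 2) F}
    (hK : ∀ i j, RLt (0, 0) (i, j) → RMem O t1 t2 (rmul h (Kmat O t1 t2 i j)))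
    {A : Set (GL (Fin 2) F)} (hA : RMem O t1 t2 A) : RMem O t1 t2 (rmul h A) := by
  have hinj : Function.Injective fun x : GL (Fin 2) F => x * h := mul_left_injective h
  induction hA with
  | dist D hD =>
    rcases hD with rfl | ⟨k, i, j, hp, rfl⟩
    · simpa [rmul] using rmem_empty
    · rw [rmul_lmul]; exact rmem_lmul _ (hK i j hp)
  | union A B _ _ ihA ihB => unfold rmul at *; rw [Set.image_union]; exact .union _ _ ihA ihB
  | inter A B _ _ ihA ihB => unfold rmul at *; rw [Set.image_inter hinj]; exact .inter _ _ ihA ihB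
  | diff A B _ _ ihA ihB => unfold rmul at *; rw [Set.image_sdiff hinj]; exact .diff _ _ ihA ihB

theorem AddOn.rmul {f : Set (GL (Fin 2) F) → LaurentSeries ℝ} (hf : AddOn O t1 t2 f)
    {h : GL (Fin 2) F} (hh : ∀ A, RMem O t1 t2 A → RMem O t1 t2 (rmul h A)) :
    AddOn O t1 t2 fun A => f (rmul h A) := by
  intro A B hA hB hd
  have e : _root_.rmul h (A ∪ B) = _root_.rmul h A ∪ _root_.rmul h B := Set.image_union _ _ _
  change f (_root_.rmul h (A ∪ B)) = _
  rw [e]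
  exact hf _ _ (hh A hA) (hh B hB) ((Set.disjoint_image_iff (mul_left_injective h)).2 hd)

namespace VHyp

theorem dist_inter (H : VHyp v O t1 t2) (A B : Set (GL (Fin 2) F)) (hA : Dist2 O t1 t2 A)
    (hB : Dist2 O t1 t2 B) : Dist2 O t1 t2 (A ∩ B) := by
  -- two cosets that meet, one of a smaller group than the other, are nested
  have key : ∀ (g g' : GL (Fin 2) F) (i j i' j' : ℤ), RLt (0, 0) (i, j) → RLt (0, 0) (i', j') →
      Kmat O t1 t2 i' j' ⊆ Kmat O t1 t2 i j → Dist2 O t1 t2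
        (lmul g (Kmat O t1 t2 i j) ∩ lmul g' (Kmat O t1 t2 i' j')) := by
    intro g g' i j i' j' hp hp' hK
    by_cases hne : (lmul g (Kmat O t1 t2 i j) ∩ lmul g' (Kmat O t1 t2 i' j')).Nonempty
    · right
      obtain ⟨y, hy, hy'⟩ := hne
      refine ⟨g', i', j', hp', Set.inter_eq_right.2 fun x hx => ?_⟩
      rw [mem_lmul] at *
      have := H.K_mul hp hy (H.K_mul hp (H.K_inv hp (hK hy')) (hK hx))
      simpa [mul_assoc] using this
    · exact Or.inl (Set.not_nonempty_iff_eq_empty.1 hne)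
  rcases hA with rfl | ⟨g, i, j, hp, rfl⟩
  · left; simp
  rcases hB with rfl | ⟨g', i', j', hp', rfl⟩
  · left; simp
  rcases H.K_total i j i' j' with hK | hK
  · exact key _ _ _ _ _ _ hp hp' hK
  · rw [Set.inter_comm]; exact key _ _ _ _ _ _ hp' hp hK

theorem lam_of_rmem (H : VHyp v O t1 t2) {A : Set (GL (Fin 2) F)} (hA : RMem O t1 t2 A) :
    Lam (Dist2 O t1 t2) A := by
  have hdiff : ∀ A B : Set (GL (Fin 2) F), Lam (Dist2 O t1 t2) A → Lam (Dist2 O t1 t2) B →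
      Lam (Dist2 O t1 t2) (A \ B) := fun A B hA hB => by
    rw [← Set.sdiff_inter_self_eq_sdiff, Set.inter_comm]
    exact .diff _ _ hA (hA.inter H.dist_inter hB) Set.inter_subset_left
  induction hA with
  | dist D hD => exact .basic _ hD
  | union A B _ _ ihA ihB =>
    rw [← Set.sdiff_union_self]
    exact .union _ _ (hdiff _ _ ihA ihB) ihB Set.disjoint_sdiff_left
  | inter A B _ _ ihA ihB => exact ihA.inter H.dist_inter ihB
  | diff A B _ _ ihA ihB => exact hdiff _ _ ihA ihB

/-- Two finitely additive functions on the ring that agree on cosets are equal. -/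
theorem addOn_ext (H : VHyp v O t1 t2) {f f' : Set (GL (Fin 2) F) → LaurentSeries ℝ}
    (hf : AddOn O t1 t2 f) (hf' : AddOn O t1 t2 f')
    (h : ∀ g i j, RLt (0, 0) (i, j) →
      f (lmul g (Kmat O t1 t2 i j)) = f' (lmul g (Kmat O t1 t2 i j)))
    {A : Set (GL (Fin 2) F)} (hA : RMem O t1 t2 A) : f A = f' A := by
  have key : RMem O t1 t2 A ∧ f A = f' A := by
    have hL := H.lam_of_rmem hA
    clear hA
    induction hL with
    | basic D hD =>
      refine ⟨.dist _ hD, ?_⟩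
      rcases hD with rfl | ⟨k, i, j, hp, rfl⟩
      · rw [hf.empty, hf'.empty]
      · exact h k i j hp
    | union A B _ _ hd ihA ihB =>
      exact ⟨.union _ _ ihA.1 ihB.1, by
        rw [hf _ _ ihA.1 ihB.1 hd, hf' _ _ ihA.1 ihB.1 hd, ihA.2, ihB.2]⟩
    | diff A B _ _ hd ihA ihB =>
      have hm := RMem.diff _ _ ihA.1 ihB.1
      refine ⟨hm, ?_⟩
      have e1 := hf _ _ hm ihB.1 Set.disjoint_sdiff_left
      have e2 := hf' _ _ hm ihB.1 Set.disjoint_sdiff_left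
      rw [Set.sdiff_union_of_subset hd] at e1 e2
      have e3 := ihA.2
      rw [e1, e2, ihB.2] at e3
      exact add_right_cancel e3
  exact key.2

/-- A right `K_{i,j}`-invariant set meeting finitely many cosets of `K_{i,j}` is a disjoint union
of `n` such cosets, so it lies in the ring and every left-invariant additive function takes on it
`n` times its value on `K_{i,j}`. -/
theorem count (H : VHyp v O t1 t2) {i j : ℤ} (hp : RLt (0, 0) (i, j))
    {S : Set (GL (Fin 2) F)} (hS : ∀ x ∈ S, ∀ k ∈ Kmat O t1 t2 i j, x * k ∈ S)
    (hcov : Cov (Kmat O t1 t2 i j) S) :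
    RMem O t1 t2 S ∧ ∃ n : ℕ, ∀ f : Set (GL (Fin 2) F) → LaurentSeries ℝ, AddOn O t1 t2 f →
      (∀ g, f (lmul g (Kmat O t1 t2 i j)) = f (Kmat O t1 t2 i j)) →
      f S = n • f (Kmat O t1 t2 i j) := by
  obtain ⟨T, hT, hcov⟩ := hcov
  induction T, hT using Set.Finite.induction_on generalizing S with
  | empty =>
    have : S = ∅ := Set.eq_empty_of_forall_notMem fun x hx => by simpa using hcov x hx
    subst this
    exact ⟨rmem_empty, 0, fun f hf _ => by rw [hf.empty]; simp⟩
  | @insert g T _ _ ih =>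
    by_cases hne : (lmul g (Kmat O t1 t2 i j) ∩ S).Nonempty
    · have hsub : lmul g (Kmat O t1 t2 i j) ⊆ S := by
        obtain ⟨y, hy, hyS⟩ := hne
        intro x hx
        rw [mem_lmul] at *
        have := hS y hyS _ (H.K_mul hp (H.K_inv hp hy) hx)
        simpa [mul_assoc] using this
      obtain ⟨hR, n, hn⟩ := ih (S := S \ lmul g (Kmat O t1 t2 i j)) (by
          rintro x ⟨hx, hx'⟩ k hk
          refine ⟨hS x hx k hk, fun h => hx' ?_⟩
          rw [mem_lmul] at *
          have := H.K_mul hp h (H.K_inv hp hk)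
          simpa [mul_assoc] using this) (by
          rintro x ⟨hx, hx'⟩
          obtain ⟨k, hk, h⟩ := hcov x hx
          rcases hk with rfl | hk
          · exact absurd (mem_lmul.2 h) hx'
          · exact ⟨k, hk, h⟩)
      have hS' : S = (S \ lmul g (Kmat O t1 t2 i j)) ∪ lmul g (Kmat O t1 t2 i j) :=
        (Set.sdiff_union_of_subset hsub).symm
      refine ⟨?_, n + 1, fun f hf hinv => ?_⟩
      · rw [hS']; exact .union _ _ hR (rmem_coset g hp)
      · conv_lhs => rw [hS']
        rw [hf _ _ hR (rmem_coset g hp) Set.disjoint_sdiff_left, hn f hf hinv, hinv, add_smul,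
          one_smul]
    · refine ih hS fun x hx => ?_
      obtain ⟨k, hk, h⟩ := hcov x hx
      rcases hk with rfl | hk
      · exact absurd ⟨x, mem_lmul.2 h, hx⟩ hne
      · exact ⟨k, hk, h⟩

theorem rmul_GLO_K (H : VHyp v O t1 t2) {k : GL (Fin 2) F} (hk : k ∈ GLO O) (i j : ℤ) :
    rmul k (Kmat O t1 t2 i j) = lmul k (Kmat O t1 t2 i j) := by
  ext x
  rw [mem_rmul, mem_lmul]
  constructor
  · intro h
    have := H.K_conj_GLO hk h
    simpa [mul_assoc] using this
  · intro h
    have := H.K_conj_GLO (H.GLO_inv hk) h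
    simpa [mul_assoc] using this

theorem rmem_rmul_GLO (H : VHyp v O t1 t2) {k : GL (Fin 2) F} (hk : k ∈ GLO O)
    {A : Set (GL (Fin 2) F)} (hA : RMem O t1 t2 A) : RMem O t1 t2 (rmul k A) :=
  rmem_rmul (fun i j hp => by rw [H.rmul_GLO_K hk]; exact rmem_coset k hp) hA

/-- Right invariance under `GL₂(O_F)`, which normalizes every `K_{i,j}`. -/
theorem mu_rmul_GLO (H : VHyp v O t1 t2) {mu : Set (GL (Fin 2) F) → LaurentSeries ℝ}
    (hadd : AddOn O t1 t2 mu)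
    (hinv : ∀ (g : GL (Fin 2) F) (A : Set (GL (Fin 2) F)), RMem O t1 t2 A → mu (lmul g A) = mu A)
    {k : GL (Fin 2) F} (hk : k ∈ GLO O) {A : Set (GL (Fin 2) F)} (hA : RMem O t1 t2 A) :
    mu (rmul k A) = mu A := by
  refine H.addOn_ext (f := fun A => mu (rmul k A)) (hadd.rmul fun A => H.rmem_rmul_GLO hk) hadd
    (fun g i j hp => ?_) hA
  rw [rmul_lmul, H.rmul_GLO_K hk, hinv _ _ (rmem_lmul _ (rmem_K hp)), hinv _ _ (rmem_K hp),
    hinv _ _ (rmem_K hp)]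

end VHyp

end Additive

/-! ### Right invariance under diagonal matrices -/

section Diagonal

variable {F : Type*} [Field F] {v : F → ℤ × ℤ} {O : Subring F} {t1 t2 : F}

namespace VHyp

/-- Conjugation by a diagonal matrix whose entries have the same second valuation moves the
groups `K_{i,j}` by a bounded amount in the first index only. -/
theorem K_conj_diag (H : VHyp v O t1 t2) {d : GL (Fin 2) F}
    (hd : ∀ a b, a ≠ b → (d : Matrix (Fin 2) (Fin 2) F) a b = 0)
    (hlev : (v ((d : Matrix (Fin 2) (Fin 2) F) 0 0)).2 =
      (v ((d : Matrix (Fin 2) (Fin 2) F) 1 1)).2)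
    {N : ℕ} (hN : ((v ((d : Matrix (Fin 2) (Fin 2) F) 0 0)).1 -
      (v ((d : Matrix (Fin 2) (Fin 2) F) 1 1)).1).natAbs ≤ N)
    {i j : ℤ} {k : GL (Fin 2) F} (hk : k ∈ Kmat O t1 t2 (i + N) j) :
    d⁻¹ * k * d ∈ Kmat O t1 t2 i j := by
  refine H.K_conj (fun M hM a b => ?_) hk
  rw [diag_conj hd]
  have h1 : VGe v (-v ((d : Matrix (Fin 2) (Fin 2) F) a a))
      ((d : Matrix (Fin 2) (Fin 2) F) a a)⁻¹ :=
    Or.inr (by rw [H.v_inv (diag_ne hd a)]; exact Or.inr ⟨rfl, le_rfl⟩)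
  have h2 : VGe v (v ((d : Matrix (Fin 2) (Fin 2) F) b b))
      ((d : Matrix (Fin 2) (Fin 2) F) b b) := Or.inr (Or.inr ⟨rfl, le_rfl⟩)
  refine (H.ge_mul (H.ge_mul h1 (hM a b)) h2).mono ?_
  fin_cases a <;> fin_cases b <;> simp [RLex] <;> omega

/-- For such a matrix `d`, the translate `K_{i,j} d` is a finite disjoint union of left cosets of
`K_{i+N,j}`. -/
theorem diag_count (H : VHyp v O t1 t2) [IsLocalRing ↥O]
    [Finite (IsLocalRing.ResidueField ↥O)] {d : GL (Fin 2) F}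
    (hd : ∀ a b, a ≠ b → (d : Matrix (Fin 2) (Fin 2) F) a b = 0)
    (hlev : (v ((d : Matrix (Fin 2) (Fin 2) F) 0 0)).2 =
      (v ((d : Matrix (Fin 2) (Fin 2) F) 1 1)).2)
    {N : ℕ} (hN : ((v ((d : Matrix (Fin 2) (Fin 2) F) 0 0)).1 -
      (v ((d : Matrix (Fin 2) (Fin 2) F) 1 1)).1).natAbs ≤ N)
    {i j : ℤ} (hp : RLt (0, 0) (i, j)) :
    RMem O t1 t2 (rmul d (Kmat O t1 t2 i j)) ∧
      ∃ n : ℕ, ∀ f : Set (GL (Fin 2) F) → LaurentSeries ℝ, AddOn O t1 t2 f →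
      (∀ g, f (lmul g (Kmat O t1 t2 (i + N) j)) = f (Kmat O t1 t2 (i + N) j)) →
      f (rmul d (Kmat O t1 t2 i j)) = n • f (Kmat O t1 t2 (i + N) j) := by
  have hp' : RLt (0, 0) (i + N, j) := by unfold RLt at *; simp at *; omega
  have hinv := diag_inv hd
  have hd' : ∀ a b, a ≠ b → ((d⁻¹ : GL (Fin 2) F) : Matrix (Fin 2) (Fin 2) F) a b = 0 :=
    fun a b hab => by rw [hinv, if_neg hab]
  have hconj : ∀ k ∈ Kmat O t1 t2 (i + N) j, d * k * d⁻¹ ∈ Kmat O t1 t2 i j := by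
    intro k hk
    have := H.K_conj_diag hd' (N := N)
      (by simp only [hinv, if_true, H.v_inv (diag_ne hd _), Prod.snd_neg]; omega)
      (by simp only [hinv, if_true, H.v_inv (diag_ne hd _), Prod.fst_neg]; omega) hk
    simpa using this
  refine H.count hp' (fun x hx k hk => ?_) ?_
  · rw [mem_rmul] at *
    have := H.K_mul hp hx (hconj k hk)
    simpa [mul_assoc] using this
  · obtain ⟨T, hT, hcov⟩ := H.cov_add hp (N + N)
    refine ⟨(fun g => g * d) '' T, hT.image _, fun x hx => ?_⟩
    obtain ⟨g, hg, h⟩ := hcov _ (mem_rmul.1 hx)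
    refine ⟨g * d, ⟨g, hg, rfl⟩, ?_⟩
    rw [Nat.cast_add, ← add_assoc] at h
    have := H.K_conj_diag hd hlev hN h
    simpa [mul_assoc] using this

/-- Conjugating a diagonal matrix by the swap exchanges its entries, so the product of the two is
scalar and `d w d` translates `K_{i,j}` to a left coset of itself. -/
theorem rmul_diag_swap (H : VHyp v O t1 t2) {d : GL (Fin 2) F}
    (hd : ∀ a b, a ≠ b → (d : Matrix (Fin 2) (Fin 2) F) a b = 0) (i j : ℤ) :
    rmul (d * swapGL F * d) (Kmat O t1 t2 i j) =
      lmul (d * swapGL F * d) (Kmat O t1 t2 i j) := by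
  -- `d w d w` is the scalar matrix with entry `d₀₀ d₁₁`
  have hz : ∀ x : GL (Fin 2) F, d * swapGL F * d * swapGL F * x =
      x * (d * swapGL F * d * swapGL F) := by
    intro x
    have e : ((d * swapGL F * d * swapGL F : GL (Fin 2) F) : Matrix (Fin 2) (Fin 2) F) =
        ((d : Matrix (Fin 2) (Fin 2) F) 0 0 * (d : Matrix (Fin 2) (Fin 2) F) 1 1) • 1 := by
      ext a b
      have h01 := hd 0 1 (by decide)
      have h10 := hd 1 0 (by decide)
      fin_cases a <;> fin_cases b <;>
        simp [Matrix.mul_apply, Fin.sum_univ_two, swapGL_coe, h01, h10, mul_comm]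
    apply Units.ext
    rw [Units.val_mul, Units.val_mul x, e]
    simp
  have hw := H.rmul_GLO_K H.swap_mem i j
  have e : d * swapGL F * d = d * swapGL F * d * swapGL F * swapGL F := by
    have : swapGL F * swapGL F = 1 := by
      nth_rw 1 [← swapGL_inv]; simp
    rw [mul_assoc _ (swapGL F) (swapGL F), this, mul_one]
  rw [e]
  generalize d * swapGL F * d * swapGL F = z at hz
  rw [← lmul_lmul, ← hw, ← rmul_lmul, ← rmul_rmul]
  congr 1
  ext x
  rw [mem_rmul, mem_lmul]
  have := hz (z⁻¹ * x * z⁻¹)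
  rw [show x * z⁻¹ = z⁻¹ * x by simpa [mul_assoc] using this]

/-- Right translation by a diagonal matrix `d` with entries of equal second valuation preserves
the measure. With `K_i = K_{i,j}`, the set `K_i d` is a union of `n_i` cosets of
`K_{i+N}`, while `K_i` is a union of `m = q^{4N}` of them. Additivity gives `n_i = n_{i+N}`, and
applying the swap `w` and then `d` again gives, as `K_i d w d` is a left coset of `K_i`, `n_i n_{i+N} = m²`.
Hence `n_i = m`. -/
theorem mu_rmul_diag (H : VHyp v O t1 t2) [IsLocalRing ↥O]
    [Finite (IsLocalRing.ResidueField ↥O)] {mu : Set (GL (Fin 2) F) → LaurentSeries ℝ}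
    (hadd : AddOn O t1 t2 mu)
    (hinv : ∀ (g : GL (Fin 2) F) (A : Set (GL (Fin 2) F)), RMem O t1 t2 A → mu (lmul g A) = mu A)
    {C q : ℝ} (hC : C ≠ 0) (hq : 0 < q)
    (hval : ∀ i j : ℤ, RLt (0, 0) (i, j) → mu (Kmat O t1 t2 i j) =
      HahnSeries.single (4 * j) (C * q ^ (-(4 * i))))
    {d : GL (Fin 2) F} (hd : ∀ a b, a ≠ b → (d : Matrix (Fin 2) (Fin 2) F) a b = 0)
    (hlev : (v ((d : Matrix (Fin 2) (Fin 2) F) 0 0)).2 =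
      (v ((d : Matrix (Fin 2) (Fin 2) F) 1 1)).2)
    {A : Set (GL (Fin 2) F)} (hA : RMem O t1 t2 A) : mu (rmul d A) = mu A := by
  obtain ⟨N, hN⟩ : ∃ N : ℕ, ((v ((d : Matrix (Fin 2) (Fin 2) F) 0 0)).1 -
      (v ((d : Matrix (Fin 2) (Fin 2) F) 1 1)).1).natAbs ≤ N := ⟨_, le_rfl⟩
  have hR : ∀ A, RMem O t1 t2 A → RMem O t1 t2 (rmul d A) := fun A hA =>
    rmem_rmul (fun i j hp => (H.diag_count hd hlev hN hp).1) hA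
  have hfadd : AddOn O t1 t2 fun A => mu (rmul d A) := hadd.rmul hR
  have hfinv : ∀ (g : GL (Fin 2) F) (A : Set (GL (Fin 2) F)), RMem O t1 t2 A →
      mu (rmul d (lmul g A)) = mu (rmul d A) := fun g A hA => by
    rw [rmul_lmul, hinv _ _ (hR A hA)]
  have hw : ∀ A, RMem O t1 t2 A → RMem O t1 t2 (rmul (swapGL F) A) :=
    fun A => H.rmem_rmul_GLO H.swap_mem
  have hfwadd : AddOn O t1 t2 fun A => mu (rmul d (rmul (swapGL F) A)) := hfadd.rmul hw
  refine H.addOn_ext hfadd hadd (fun g i j hp => ?_) hA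
  rw [hfinv _ _ (rmem_K hp), hinv _ _ (rmem_K hp)]
  have hp1 : RLt (0, 0) (i + N, j) := by unfold RLt at *; simp at *; omega
  have hp2 : RLt (0, 0) (i + N + N, j) := by unfold RLt at *; simp at *; omega
  obtain ⟨-, n, hn⟩ := H.diag_count hd hlev hN hp
  obtain ⟨-, n', hn'⟩ := H.diag_count hd hlev hN hp1
  obtain ⟨-, m, hm⟩ := H.count (S := Kmat O t1 t2 i j) hp1
    (fun x hx k hk => H.K_mul hp hx (H.K_le (i := i) (i' := i + N) (Or.inr ⟨rfl, by simp⟩) hk)) (H.cov_add hp N)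
  have hKinv : ∀ g, mu (lmul g (Kmat O t1 t2 (i + N) j)) = mu (Kmat O t1 t2 (i + N) j) :=
    fun g => hinv g _ (rmem_K hp1)
  have hKinv' : ∀ g, mu (lmul g (Kmat O t1 t2 (i + N + N) j)) = mu (Kmat O t1 t2 (i + N + N) j) :=
    fun g => hinv g _ (rmem_K hp2)
  have e1 := hn mu hadd hKinv
  have e2 := hn' mu hadd hKinv'
  have e3 := hm mu hadd hKinv
  have e4 := hm _ hfadd fun g => hfinv g _ (rmem_K hp1)
  have e5 := hn _ hfwadd fun g => by
    rw [rmul_lmul, hfinv _ _ (hw _ (rmem_K hp1))]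
  rw [H.rmul_GLO_K H.swap_mem (i + N) j, hfinv _ _ (rmem_K hp1), rmul_rmul, rmul_rmul,
    ← mul_assoc, H.rmul_diag_swap hd, hinv _ _ (rmem_K hp)] at e5
  rw [e1, e2, hval _ _ hp1, hval _ _ hp2] at e4
  rw [e2, hval _ _ hp, hval _ _ hp2] at e5
  rw [hval _ _ hp, hval _ _ hp1] at e3
  rw [e1, hval _ _ hp, hval _ _ hp1]
  -- from here on, compare coefficients at `4 j`
  have c3 := congrArg (fun s : LaurentSeries ℝ => s.coeff (4 * j)) e3
  have c4 := congrArg (fun s : LaurentSeries ℝ => s.coeff (4 * j)) e4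
  have c5 := congrArg (fun s : LaurentSeries ℝ => s.coeff (4 * j)) e5
  simp only [HahnSeries.coeff_smul, HahnSeries.coeff_single_same] at c3 c4 c5
  simp only [nsmul_eq_mul] at c3 c4 c5
  have p1 : q ^ (-(4 * (i + N))) = q ^ (-(4 * i)) * q ^ (-(4 * (N : ℤ))) := by
    rw [← zpow_add₀ hq.ne']; congr 1; ring
  have p2 : q ^ (-(4 * (i + N + N))) =
      q ^ (-(4 * i)) * q ^ (-(4 * (N : ℤ))) * q ^ (-(4 * (N : ℤ))) := by
    rw [← zpow_add₀ hq.ne', ← zpow_add₀ hq.ne']; congr 1; ring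
  have hy : C * q ^ (-(4 * i)) ≠ 0 := mul_ne_zero hC (zpow_pos hq _).ne'
  have hr : 0 < q ^ (-(4 * (N : ℤ))) := zpow_pos hq _
  rw [p1] at c3
  rw [p1, p2] at c4
  rw [p2] at c5
  have hnm : n = m := by
    generalize q ^ (-(4 * (N : ℤ))) = r at *
    generalize q ^ (-(4 * i)) = s at *
    have d3 : (m : ℝ) * r = 1 := mul_left_cancel₀ hy (by linear_combination -c3)
    have d4 : (n : ℝ) * r = n' * r :=
      mul_left_cancel₀ hy (by linear_combination c4 + (C * s * n' * r) * d3)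
    have d5 : (n : ℝ) * r * (n' * r) = 1 := mul_left_cancel₀ hy (by linear_combination -c5)
    rw [← d4] at d5
    have hpos : 0 ≤ (n : ℝ) * r := by positivity
    have d6 : (n : ℝ) * r = 1 := by nlinarith
    exact_mod_cast mul_right_cancel₀ hr.ne' (d6.trans d3.symm)
  rw [hnm, ← e3]

end VHyp

end Diagonal

/-- If `μ` is finitely additive, left translation-invariant and takes
the values `μ(g K_{i,j}) = (q³/((q²−1)(q−1))) q^{−4i} X^{4j}` on distinguished sets, then
`μ` is also right translation-invariant: `μ(Ah) = μ(A)` whenever `A ∈ ℛ` and `Ah ∈ ℛ`. -/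
theorem statement5
    {F : Type*} [Field F] (v : F → ℤ × ℤ)
    (hv_mul : ∀ x y : F, x ≠ 0 → y ≠ 0 → v (x * y) = v x + v y)
    (hv_add : ∀ x y : F, x ≠ 0 → y ≠ 0 → x + y ≠ 0 →
      RLex (v x) (v (x + y)) ∨ RLex (v y) (v (x + y)))
    (hv_surj : ∀ p : ℤ × ℤ, ∃ x : F, x ≠ 0 ∧ v x = p)
    (O : Subring F) (hO : ∀ x : F, x ∈ O ↔ x = 0 ∨ RLex (0, 0) (v x))
    (t1 t2 : F) (ht1 : t1 ≠ 0) (ht2 : t2 ≠ 0)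
    (hvt1 : v t1 = (1, 0)) (hvt2 : v t2 = (0, 1))
    [IsLocalRing ↥O] [Finite (IsLocalRing.ResidueField ↥O)] (q : ℕ)
    (hq : Nat.card (IsLocalRing.ResidueField ↥O) = q)
    (mu : Set (GL (Fin 2) F) → LaurentSeries ℝ)
    (hadd : ∀ A B : Set (GL (Fin 2) F), RMem O t1 t2 A → RMem O t1 t2 B → Disjoint A B →
      mu (A ∪ B) = mu A + mu B)
    (hinv : ∀ (g : GL (Fin 2) F) (A : Set (GL (Fin 2) F)), RMem O t1 t2 A →
      mu (lmul g A) = mu A)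
    (hval : ∀ (g : GL (Fin 2) F) (i j : ℤ), RLt (0, 0) (i, j) →
      mu (lmul g (Kmat O t1 t2 i j))
        = HahnSeries.single (4 * j)
            ((q : ℝ) ^ 3 / (((q : ℝ) ^ 2 - 1) * ((q : ℝ) - 1)) * (q : ℝ) ^ (-(4 * i)))) :
    ∀ (A : Set (GL (Fin 2) F)) (h : GL (Fin 2) F), RMem O t1 t2 A →
      RMem O t1 t2 ((fun x => x * h) '' A) → mu ((fun x => x * h) '' A) = mu A := by
  have H : VHyp v O t1 t2 := ⟨hv_mul, hv_add, hO, ht1, ht2, hvt1, hvt2⟩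
  have hq1 : (1 : ℝ) < q := by
    rw [← hq]; exact_mod_cast Finite.one_lt_card
  have hC : (q : ℝ) ^ 3 / (((q : ℝ) ^ 2 - 1) * ((q : ℝ) - 1)) ≠ 0 := by
    have h1 : (0 : ℝ) < (q : ℝ) - 1 := by linarith
    have h2 : (0 : ℝ) < (q : ℝ) ^ 2 - 1 := by nlinarith
    positivity
  intro A h hA hAh
  change RMem O t1 t2 (rmul h A) at hAh
  change mu (rmul h A) = mu A
  obtain ⟨k1, hk1, k2, hk2, d, hd, rfl⟩ := H.cartan h
  have hA1 := H.rmem_rmul_GLO hk1 hA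
  have hA2 := H.rmem_rmul_GLO (H.GLO_inv hk2) hAh
  rw [← H.mu_rmul_GLO hadd hinv hk1 hA, ← H.mu_rmul_GLO hadd hinv (H.GLO_inv hk2) hAh]
  have e : rmul k2⁻¹ (rmul (k1 * d * k2) A) = rmul d (rmul k1 A) := by
    simp [rmul_rmul, mul_assoc]
  rw [e] at hA2 ⊢
  rcases (rmul k1 A).eq_empty_or_nonempty with h0 | hne
  · rw [h0]; simp [rmul]
  · refine H.mu_rmul_diag hadd hinv hC (by linarith) (fun i j hp => ?_) hd
      (H.diag_level hA1 hne hd hA2) hA1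
    rw [← hval 1 i j hp, lmul_one']
end
end

section
/- The class of ddd-sets in G is closed under binary unions, binary intersections, and set differences; consequently it is the smallest ring of sets (collection closed under these operations) containing all distinguished sets. -/
/-- A distinguished set in `G` with respect to a family `𝒞` of subgroups: the empty set,
or a left coset `gH` with `H ∈ 𝒞`. -/
def Distinguished {G : Type*} [Group G] (C : Set (Subgroup G)) (D : Set G) : Prop :=
  D = ∅ ∨ ∃ (g : G) (H : Subgroup G), H ∈ C ∧ D = lmul g (H : Set G)

/-- A dd-set: `(⋃ᵢ Aᵢ) \ (⋃ⱼ Bⱼ)` with the `Aᵢ` finitely many pairwise disjoint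
distinguished sets, the `Bⱼ` finitely many pairwise disjoint distinguished sets, and
`⋃ⱼ Bⱼ ⊆ ⋃ᵢ Aᵢ`. -/
def IsDD {G : Type*} [Group G] (C : Set (Subgroup G)) (E : Set G) : Prop :=
  ∃ A B : Finset (Set G),
    (∀ D ∈ A, Distinguished C D) ∧ (∀ D ∈ B, Distinguished C D) ∧
    (∀ D ∈ A, ∀ D' ∈ A, D ≠ D' → Disjoint D D') ∧
    (∀ D ∈ B, ∀ D' ∈ B, D ≠ D' → Disjoint D D') ∧
    ⋃₀ (B : Set (Set G)) ⊆ ⋃₀ (A : Set (Set G)) ∧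
    E = ⋃₀ (A : Set (Set G)) \ ⋃₀ (B : Set (Set G))

/-- A ddd-set: a finite disjoint union of dd-sets. -/
def IsDDD {G : Type*} [Group G] (C : Set (Subgroup G)) (E : Set G) : Prop :=
  ∃ S : Finset (Set G), (∀ D ∈ S, IsDD C D) ∧
    (∀ D ∈ S, ∀ D' ∈ S, D ≠ D' → Disjoint D D') ∧ E = ⋃₀ (S : Set (Set G))

/-- A finite union of distinguished sets, not required to be disjoint. -/
def IsFinUnion {G : Type*} [Group G] (C : Set (Subgroup G)) (X : Set G) : Prop :=
  ∃ A : Finset (Set G), (∀ D ∈ A, Distinguished C D) ∧ X = ⋃₀ (A : Set (Set G))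

section

variable {G : Type*} [Group G] {C : Set (Subgroup G)}

lemma mem_lmul_subgroup {g x : G} {H : Subgroup G} :
    x ∈ lmul g (H : Set G) ↔ g⁻¹ * x ∈ H := by
  constructor
  · rintro ⟨h, hh, rfl⟩
    simpa using hh
  · intro h
    exact ⟨g⁻¹ * x, h, by simp⟩

lemma lmul_subset_of_le {g g' x : G} {H H' : Subgroup G} (hle : H ≤ H')
    (hx : x ∈ lmul g (H : Set G)) (hx' : x ∈ lmul g' (H' : Set G)) :
    lmul g (H : Set G) ⊆ lmul g' (H' : Set G) := by
  intro y hy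
  rw [mem_lmul_subgroup] at *
  have h := H'.mul_mem hx' (hle (H.mul_mem (H.inv_mem hx) hy))
  have e : g'⁻¹ * x * ((g⁻¹ * x)⁻¹ * (g⁻¹ * y)) = g'⁻¹ * y := by group
  rwa [e] at h

lemma Distinguished.laminar (hchain : ∀ H ∈ C, ∀ H' ∈ C, H ≤ H' ∨ H' ≤ H) {D D' : Set G}
    (hD : Distinguished C D) (hD' : Distinguished C D') :
    Disjoint D D' ∨ D ⊆ D' ∨ D' ⊆ D := by
  rcases hD with rfl | ⟨g, H, hH, rfl⟩
  · simp
  rcases hD' with rfl | ⟨g', H', hH', rfl⟩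
  · simp
  by_cases hdis : Disjoint (lmul g (H : Set G)) (lmul g' (H' : Set G))
  · exact Or.inl hdis
  obtain ⟨x, hx, hx'⟩ := Set.not_disjoint_iff.1 hdis
  rcases hchain H hH H' hH' with h | h
  · exact Or.inr (Or.inl (lmul_subset_of_le h hx hx'))
  · exact Or.inr (Or.inr (lmul_subset_of_le h hx' hx))

lemma Distinguished.inter (hchain : ∀ H ∈ C, ∀ H' ∈ C, H ≤ H' ∨ H' ≤ H) {D D' : Set G}
    (hD : Distinguished C D) (hD' : Distinguished C D') : Distinguished C (D ∩ D') := by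
  rcases hD.laminar hchain hD' with h | h | h
  · exact Or.inl h.inter_eq
  · rwa [Set.inter_eq_left.2 h]
  · rwa [Set.inter_eq_right.2 h]

lemma IsFinUnion.union {X Y : Set G} (hX : IsFinUnion C X) (hY : IsFinUnion C Y) :
    IsFinUnion C (X ∪ Y) := by
  classical
  obtain ⟨A, hA, rfl⟩ := hX
  obtain ⟨B, hB, rfl⟩ := hY
  refine ⟨A ∪ B, fun D hD => ?_, by rw [Finset.coe_union, Set.sUnion_union]⟩
  rcases Finset.mem_union.1 hD with h | h
  · exact hA D h
  · exact hB D h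

lemma IsFinUnion.inter (hchain : ∀ H ∈ C, ∀ H' ∈ C, H ≤ H' ∨ H' ≤ H) {X Y : Set G}
    (hX : IsFinUnion C X) (hY : IsFinUnion C Y) : IsFinUnion C (X ∩ Y) := by
  classical
  obtain ⟨A, hA, rfl⟩ := hX
  obtain ⟨B, hB, rfl⟩ := hY
  refine ⟨Finset.image₂ (· ∩ ·) A B, fun D hD => ?_, ?_⟩
  · obtain ⟨a, ha, b, hb, rfl⟩ := Finset.mem_image₂.1 hD
    exact (hA a ha).inter hchain (hB b hb)
  · ext x
    simp only [Set.mem_inter_iff, Set.mem_sUnion, Finset.mem_coe, Finset.mem_image₂]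
    constructor
    · rintro ⟨⟨a, ha, hxa⟩, b, hb, hxb⟩
      exact ⟨a ∩ b, ⟨a, ha, b, hb, rfl⟩, hxa, hxb⟩
    · rintro ⟨_, ⟨a, ha, b, hb, rfl⟩, hxa, hxb⟩
      exact ⟨⟨a, ha, hxa⟩, b, hb, hxb⟩

/-- The disjoint family is that of the maximal members of any given one. -/
lemma IsFinUnion.exists_disjoint (hchain : ∀ H ∈ C, ∀ H' ∈ C, H ≤ H' ∨ H' ≤ H) {X : Set G}
    (hX : IsFinUnion C X) :
    ∃ A : Finset (Set G), (∀ D ∈ A, Distinguished C D) ∧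
      (∀ D ∈ A, ∀ D' ∈ A, D ≠ D' → Disjoint D D') ∧ X = ⋃₀ (A : Set (Set G)) := by
  classical
  obtain ⟨A, hA, rfl⟩ := hX
  refine ⟨A.filter (fun D => Maximal (· ∈ A) D), fun D hD => hA D (Finset.mem_filter.1 hD).1,
    fun D hD D' hD' hne => ?_, ?_⟩
  · obtain ⟨hDA, hDm⟩ := Finset.mem_filter.1 hD
    obtain ⟨hDA', hDm'⟩ := Finset.mem_filter.1 hD'
    rcases (hA D hDA).laminar hchain (hA D' hDA') with h | h | h
    · exact h
    · exact absurd (hDm.eq_of_le hDA' h) hne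
    · exact absurd (hDm'.eq_of_le hDA h).symm hne
  · apply Set.Subset.antisymm
    · rintro x ⟨D, hD, hx⟩
      obtain ⟨M, hDM, hM⟩ := A.exists_le_maximal hD
      exact ⟨M, Finset.mem_coe.2 (Finset.mem_filter.2 ⟨hM.prop, hM⟩), hDM hx⟩
    · exact Set.sUnion_mono fun D hD => (Finset.mem_filter.1 hD).1

/-- Neither disjointness nor `Y ⊆ X` is needed to get a dd-set: `X \ Y = X \ (X ∩ Y)`. -/
lemma IsFinUnion.isDD_diff (hchain : ∀ H ∈ C, ∀ H' ∈ C, H ≤ H' ∨ H' ≤ H) {X Y : Set G}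
    (hX : IsFinUnion C X) (hY : IsFinUnion C Y) : IsDD C (X \ Y) := by
  obtain ⟨A, hA, hAd, hXA⟩ := hX.exists_disjoint hchain
  obtain ⟨B, hB, hBd, hXB⟩ := (hX.inter hchain hY).exists_disjoint hchain
  refine ⟨A, B, hA, hB, hAd, hBd, ?_, ?_⟩
  · rw [← hXA, ← hXB]
    exact Set.inter_subset_left
  · rw [← hXA, ← hXB, Set.sdiff_self_inter]

lemma IsDD.exists_finUnion {E : Set G} (hE : IsDD C E) :
    ∃ X Y, IsFinUnion C X ∧ IsFinUnion C Y ∧ E = X \ Y := by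
  obtain ⟨A, B, hA, hB, -, -, -, rfl⟩ := hE
  exact ⟨_, _, ⟨A, hA, rfl⟩, ⟨B, hB, rfl⟩, rfl⟩

lemma isDDD_empty : IsDDD C (∅ : Set G) := ⟨∅, by simp, by simp, by simp⟩

lemma IsDD.isDDD {E : Set G} (hE : IsDD C E) : IsDDD C E :=
  ⟨{E}, by simpa using hE, by simp, by simp⟩

lemma Distinguished.isDDD {D : Set G} (hD : Distinguished C D) : IsDDD C D :=
  IsDD.isDDD ⟨{D}, ∅, by simpa using hD, by simp, by simp, by simp, by simp, by simp⟩

/-- Induction on the number of dd-pieces of a ddd-set. -/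
lemma IsDDD.induct {p : Set G → Prop} (h0 : p ∅)
    (hs : ∀ D F : Set G, IsDD C D → Disjoint D F → p F → p (D ∪ F))
    {E : Set G} (hE : IsDDD C E) : p E := by
  classical
  obtain ⟨S, hS, hSd, rfl⟩ := hE
  induction S using Finset.induction_on with
  | empty => simpa using h0
  | insert D S hDS ih =>
    rw [Finset.coe_insert, Set.sUnion_insert]
    refine hs D _ (hS D (Finset.mem_insert_self D S)) ?_
      (ih (fun D' h => hS D' (Finset.mem_insert_of_mem h))
        (fun D₁ h₁ D₂ h₂ => hSd D₁ (Finset.mem_insert_of_mem h₁) D₂ (Finset.mem_insert_of_mem h₂)))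
    rw [Set.disjoint_sUnion_right]
    intro D' hD'
    refine hSd D (Finset.mem_insert_self D S) D' (Finset.mem_insert_of_mem hD') ?_
    rintro rfl
    exact hDS hD'

lemma IsDDD.disjoint_union {E E' : Set G} (hE : IsDDD C E) (hE' : IsDDD C E')
    (hd : Disjoint E E') : IsDDD C (E ∪ E') := by
  classical
  obtain ⟨S, hS, hSd, rfl⟩ := hE
  obtain ⟨T, hT, hTd, rfl⟩ := hE'
  have cross : ∀ D ∈ S, ∀ D' ∈ T, Disjoint D D' := fun D hD D' hD' =>
    hd.mono (Set.subset_sUnion_of_mem (Finset.mem_coe.2 hD))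
      (Set.subset_sUnion_of_mem (Finset.mem_coe.2 hD'))
  refine ⟨S ∪ T, fun D hD => ?_, fun D hD D' hD' hne => ?_,
    by rw [Finset.coe_union, Set.sUnion_union]⟩
  · rcases Finset.mem_union.1 hD with h | h
    · exact hS D h
    · exact hT D h
  · rcases Finset.mem_union.1 hD with h | h <;> rcases Finset.mem_union.1 hD' with h' | h'
    · exact hSd D h D' h' hne
    · exact cross D h D' h'
    · exact (cross D' h' D h).symm
    · exact hTd D h D' h' hne

lemma IsDD.diff (hchain : ∀ H ∈ C, ∀ H' ∈ C, H ≤ H' ∨ H' ≤ H) {E E' : Set G}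
    (hE : IsDD C E) (hE' : IsDD C E') : IsDDD C (E \ E') := by
  obtain ⟨X, Y, hX, hY, rfl⟩ := hE.exists_finUnion
  obtain ⟨X', Y', hX', hY', rfl⟩ := hE'.exists_finUnion
  have e : (X \ Y) \ (X' \ Y') = (X \ (Y ∪ X')) ∪ ((X ∩ (X' ∩ Y')) \ Y) := by
    ext x
    simp only [Set.mem_sdiff, Set.mem_union, Set.mem_inter_iff]
    tauto
  rw [e]
  refine IsDDD.disjoint_union (hX.isDD_diff hchain (hY.union hX')).isDDD
    ((hX.inter hchain (hX'.inter hchain hY')).isDD_diff hchain hY).isDDD ?_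
  rw [Set.disjoint_left]
  rintro x ⟨-, h⟩ ⟨⟨-, h', -⟩, -⟩
  exact h (Or.inr h')

lemma IsDDD.diff_isDD (hchain : ∀ H ∈ C, ∀ H' ∈ C, H ≤ H' ∨ H' ≤ H) {E E' : Set G}
    (hE : IsDDD C E) (hE' : IsDD C E') : IsDDD C (E \ E') := by
  refine hE.induct (p := fun E => IsDDD C (E \ E')) ?_ fun D F hD hdis ih => ?_
  · simpa using isDDD_empty
  · rw [Set.union_sdiff_distrib]
    exact (hD.diff hchain hE').disjoint_union ih (hdis.mono Set.sdiff_subset Set.sdiff_subset)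

/-- The induction on the subtracted set is uniform in `E`, since its step removes the remaining
pieces from `E \ D`. -/
lemma IsDDD.diff (hchain : ∀ H ∈ C, ∀ H' ∈ C, H ≤ H' ∨ H' ≤ H) {E E' : Set G}
    (hE : IsDDD C E) (hE' : IsDDD C E') : IsDDD C (E \ E') := by
  refine hE'.induct (p := fun E' => ∀ E, IsDDD C E → IsDDD C (E \ E')) ?_ ?_ E hE
  · intro E hE
    simpa using hE
  · intro D F hD _ ih E hE
    rw [← Set.sdiff_sdiff]
    exact ih _ (hE.diff_isDD hchain hD)

lemma IsFinUnion.mem_of_union_closed {R : Set (Set G)}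
    (hR : ∀ D : Set G, Distinguished C D → D ∈ R)
    (hunion : ∀ A B : Set G, A ∈ R → B ∈ R → A ∪ B ∈ R) {X : Set G}
    (hX : IsFinUnion C X) : X ∈ R := by
  classical
  obtain ⟨A, hA, rfl⟩ := hX
  induction A using Finset.induction_on with
  | empty => simpa using hR ∅ (Or.inl rfl)
  | insert D A _ ih =>
    rw [Finset.coe_insert, Set.sUnion_insert]
    exact hunion _ _ (hR D (hA D (Finset.mem_insert_self D A)))
      (ih fun D' h => hA D' (Finset.mem_insert_of_mem h))

end

/-- The class of ddd-sets is closed under binary unions, intersections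
and differences; consequently it is the smallest ring of sets containing all
distinguished sets. -/
theorem statement9 {G : Type*} [Group G] (C : Set (Subgroup G)) (hne : C.Nonempty)
    (hchain : ∀ H ∈ C, ∀ H' ∈ C, H ≤ H' ∨ H' ≤ H) :
    (∀ E E' : Set G, IsDDD C E → IsDDD C E' →
      IsDDD C (E ∪ E') ∧ IsDDD C (E ∩ E') ∧ IsDDD C (E \ E')) ∧
    (∀ D : Set G, Distinguished C D → IsDDD C D) ∧
    (∀ R : Set (Set G),
      (∀ D : Set G, Distinguished C D → D ∈ R) →
      (∀ A B : Set G, A ∈ R → B ∈ R → A ∪ B ∈ R) →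
      (∀ A B : Set G, A ∈ R → B ∈ R → A ∩ B ∈ R) →
      (∀ A B : Set G, A ∈ R → B ∈ R → A \ B ∈ R) →
      ∀ E : Set G, IsDDD C E → E ∈ R) := by
  refine ⟨fun E E' hE hE' => ⟨?_, ?_, hE.diff hchain hE'⟩, fun D hD => hD.isDDD, ?_⟩
  · rw [← Set.sdiff_union_self]
    exact (hE.diff hchain hE').disjoint_union hE' Set.disjoint_sdiff_left
  · rw [← Set.sdiff_sdiff_right_self]
    exact hE.diff hchain (hE.diff hchain hE')
  · intro R hR hunion _ hdiff E hE
    refine hE.induct (p := (· ∈ R)) (hR ∅ (Or.inl rfl)) fun D F hD _ hF => hunion _ _ ?_ hF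
    obtain ⟨X, Y, hX, hY, rfl⟩ := hD.exists_finUnion
    exact hdiff _ _ (hX.mem_of_union_closed hR hunion) (hY.mem_of_union_closed hR hunion)
end

section
/- Let R be a commutative ring, let a ∈ R be a nonzerodivisor belonging to the Jacobson radical of R, and let t ∈ R be such that a ∈ tR. Then the map sending I_2 + aA (A ∈ M_2(R)) to the class of A in M_2(R/tR) is a well-defined surjective group homomorphism from the multiplicative group I_2 + a·M_2(R) onto the additive group M_2(R/tR), and its kernel is I_2 + at·M_2(R). In particular (I_2 + a·M_2(R))/(I_2 + at·M_2(R)) is isomorphic to the additive group M_2(R/tR). -/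
/-!
Since `a` is a nonzerodivisor, `A` is determined by `1 + a • A`, so the map is well defined.
The identity `(1 + a • A) * (1 + a • B) = 1 + a • (A + B + a • (A * B))` together with `t ∣ a`
makes it multiplicative modulo `t`. It is surjective because every `1 + a • A` has determinant
in `1 + aR`, hence is invertible as `a` lies in the Jacobson radical
(`isUnit_one_add_smul`). Its kernel consists of the `1 + a • A` with all entries of `A`
divisible by `t`.
-/

set_option synthInstance.maxHeartbeats 400000

open Matrix

theorem isUnit_one_add_smul {R : Type*} [CommRing R] {a : R}
    (hjac : a ∈ Ideal.jacobson (⊥ : Ideal R)) (A : Matrix (Fin 2) (Fin 2) R) :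
    IsUnit (1 + a • A) := by
  rw [Matrix.isUnit_iff_isUnit_det]
  have h := Ideal.mem_jacobson_bot.1 hjac (A 0 0 + A 1 1 + a * (A 0 0 * A 1 1 - A 0 1 * A 1 0))
  convert h using 1
  simp [Matrix.det_fin_two]
  ring

theorem smul_matrix_injective {R : Type*} [CommRing R] {a : R} (hreg : a ∈ nonZeroDivisors R)
    {A B : Matrix (Fin 2) (Fin 2) R} (h : a • A = a • B) : A = B := by
  ext i j
  have hij : a * A i j = a * B i j := by simpa using congrFun (congrFun h i) j
  exact (mul_cancel_left_mem_nonZeroDivisors hreg).1 hij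

theorem map_mk_eq_zero_iff {R : Type*} [CommRing R] (t : R) (A : Matrix (Fin 2) (Fin 2) R) :
    A.map (Ideal.Quotient.mk (Ideal.span ({t} : Set R))) = 0 ↔
      ∃ B : Matrix (Fin 2) (Fin 2) R, A = t • B := by
  constructor
  · intro h
    have hd : ∀ i j, t ∣ A i j := fun i j => by
      have hij := congrFun (congrFun h i) j
      simpa [Ideal.Quotient.eq_zero_iff_mem, Ideal.mem_span_singleton] using hij
    choose B hB using hd
    exact ⟨Matrix.of B, by ext i j; simpa using hB i j⟩
  · rintro ⟨B, rfl⟩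
    ext i j
    simp only [Matrix.map_apply, Matrix.smul_apply, Matrix.zero_apply, smul_eq_mul]
    rw [Ideal.Quotient.eq_zero_iff_mem, Ideal.mem_span_singleton]
    exact dvd_mul_right _ _

/-- Let `R` be a commutative ring, `a` a nonzerodivisor in the Jacobson
radical of `R`, and `t ∈ R` with `a ∈ tR`.  Then the map sending `I₂ + aA` to the class
of `A` in `M₂(R/tR)` is a well-defined surjective group homomorphism from the subgroup
`I₂ + a·M₂(R)` of `GL₂(R)` onto the additive group `M₂(R/tR)`, with kernel
`I₂ + at·M₂(R)`.  In particular `(I₂ + a·M₂(R))/(I₂ + at·M₂(R)) ≅ M₂(R/tR)`. -/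
theorem statement15 {R : Type*} [CommRing R] (a t : R)
    (hreg : a ∈ nonZeroDivisors R) (hjac : a ∈ Ideal.jacobson (⊥ : Ideal R))
    (hat : a ∈ Ideal.span ({t} : Set R))
    (H1 H2 : Subgroup (GL (Fin 2) R))
    (hH1 : (H1 : Set (GL (Fin 2) R))
      = {g : GL (Fin 2) R | ∃ A : Matrix (Fin 2) (Fin 2) R,
          (g : Matrix (Fin 2) (Fin 2) R) = 1 + a • A})
    (hH2 : (H2 : Set (GL (Fin 2) R))
      = {g : GL (Fin 2) R | ∃ A : Matrix (Fin 2) (Fin 2) R,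
          (g : Matrix (Fin 2) (Fin 2) R) = 1 + (a * t) • A}) :
    ∃ φ : H1 →* Multiplicative (Matrix (Fin 2) (Fin 2) (R ⧸ Ideal.span ({t} : Set R))),
      (∀ (g : H1) (A : Matrix (Fin 2) (Fin 2) R),
        ((g : GL (Fin 2) R) : Matrix (Fin 2) (Fin 2) R) = 1 + a • A →
          φ g = Multiplicative.ofAdd (A.map (Ideal.Quotient.mk (Ideal.span ({t} : Set R))))) ∧
      Function.Surjective φ ∧
      φ.ker = H2.subgroupOf H1 ∧
      Nonempty ((H1 ⧸ φ.ker)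
        ≃* Multiplicative (Matrix (Fin 2) (Fin 2) (R ⧸ Ideal.span ({t} : Set R)))) := by
  have ex : ∀ g : H1, ∃ A : Matrix (Fin 2) (Fin 2) R,
      ((g : GL (Fin 2) R) : Matrix (Fin 2) (Fin 2) R) = 1 + a • A := fun g => by
    have hg : (g : GL (Fin 2) R) ∈ (H1 : Set (GL (Fin 2) R)) := g.2
    rwa [hH1] at hg
  choose f hf using ex
  have huniq : ∀ (g : H1) (A : Matrix (Fin 2) (Fin 2) R),
      ((g : GL (Fin 2) R) : Matrix (Fin 2) (Fin 2) R) = 1 + a • A → f g = A := fun g A h =>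
    smul_matrix_injective hreg (add_left_cancel ((hf g).symm.trans h))
  have hmul : ∀ g h : H1, f (g * h) = f g + f h + a • (f g * f h) := fun g h => by
    apply huniq
    rw [Subgroup.coe_mul, Units.val_mul, hf g, hf h]
    simp only [mul_add, add_mul, smul_add, one_mul, mul_one, smul_mul_assoc, mul_smul_comm]
    abel
  have ha : Ideal.Quotient.mk (Ideal.span ({t} : Set R)) a = 0 :=
    Ideal.Quotient.eq_zero_iff_mem.2 hat
  let φ : H1 →* Multiplicative (Matrix (Fin 2) (Fin 2) (R ⧸ Ideal.span ({t} : Set R))) :=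
    MonoidHom.mk' (fun g => Multiplicative.ofAdd
      ((f g).map (Ideal.Quotient.mk (Ideal.span ({t} : Set R))))) (fun g h => by
        rw [← ofAdd_add, hmul]
        congr 1
        ext i j
        simp only [Matrix.map_apply, Matrix.add_apply, Matrix.smul_apply, smul_eq_mul,
          map_add, map_mul, ha, zero_mul,
          add_zero])
  have hφ : ∀ g : H1, φ g = Multiplicative.ofAdd
      ((f g).map (Ideal.Quotient.mk (Ideal.span ({t} : Set R)))) := fun _ => rfl
  have hsurj : Function.Surjective φ := by
    intro B
    choose A hA using fun i j => Ideal.Quotient.mk_surjective (Multiplicative.toAdd B i j)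
    obtain ⟨u, hu⟩ := isUnit_one_add_smul hjac (Matrix.of A)
    have hmem : u ∈ (H1 : Set (GL (Fin 2) R)) := by
      rw [hH1]
      exact ⟨_, hu⟩
    refine ⟨⟨u, hmem⟩, ?_⟩
    rw [hφ, huniq ⟨u, hmem⟩ _ hu]
    apply Multiplicative.toAdd.injective
    ext i j
    exact hA i j
  refine ⟨φ, fun g A h => by rw [hφ, huniq g A h], hsurj, ?_,
    ⟨QuotientGroup.quotientKerEquivOfSurjective φ hsurj⟩⟩
  ext g
  have hmem2 : (g : GL (Fin 2) R) ∈ H2 ↔ ∃ A : Matrix (Fin 2) (Fin 2) R,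
      ((g : GL (Fin 2) R) : Matrix (Fin 2) (Fin 2) R) = 1 + (a * t) • A := by
    rw [← SetLike.mem_coe, hH2]
    rfl
  rw [MonoidHom.mem_ker, Subgroup.mem_subgroupOf, hmem2, hφ, ofAdd_eq_one, map_mk_eq_zero_iff]
  refine exists_congr fun B => ⟨fun h => ?_, fun h => huniq g _ ?_⟩
  · rw [hf g, h, smul_smul]
  · rw [h, smul_smul]
end

section
/- Suppose a left coset g K_{i,j} (with (i,j) > (0,0)) is the union of finitely many pairwise disjoint left cosets g_r K_{i_r,j_r} (r = 1, …, n, each (i_r,j_r) > (0,0)). Then j_r = j for every r, and ∑_{r=1}^n q^{−4 i_r} = q^{−4 i} (an identity of rational numbers). -/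
/-!
Write `K(t) = 1 + t M₂(O)` for `t` in the maximal ideal `𝔪` of the local ring `O`. Since `𝔪 = (t₁)`,
the map `1 + t C ↦ C mod 𝔪` is a surjective homomorphism from `K(t)` to the additive group of
`M₂(O/𝔪)` with kernel `K(t t₁)`; hence `[K(t) : K(t t₁ ^ N)] = q ^ (4 N)`
(`relIndex_congrSubgroup_mul_pow`), and `K(t')` has infinite index in `K(t)` as soon as `t'` is
divisible by every `t t₁ ^ N` (`relIndex_congrSubgroup_eq_zero`).

If a group is a finite disjoint union of left cosets `gᵣ Hᵣ`, then by B. H. Neumann's lemma the cosets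
of subgroups of infinite index can be omitted from the cover, so by disjointness there are none; and
counting in a finite quotient gives `∑ 1 / [G : Hᵣ] = 1` (`sum_inv_index_of_partition`).
Applied to `G = K_{i,j}` and `Hᵣ = K_{iᵣ,jᵣ}`, the first fact excludes `jᵣ > j` and the second is the
asserted identity divided by `q ^ (-4 i)`.
-/

open Matrix

noncomputable section

/-! ### Partitions of a group into finitely many cosets -/

open scoped Pointwise in
/-- In a finite partition of a group into left cosets `g r • H r`, every `H r` has finite index:
by Neumann's lemma the other cosets could be omitted from the cover. -/
theorem finiteIndex_of_partition {G ι : Type*} [Group G] [Fintype ι]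
    (H : ι → Subgroup G) (g : ι → G) (hcov : ∀ x, ∃! r, (g r)⁻¹ * x ∈ H r) (r : ι) :
    (H r).FiniteIndex := by
  classical
  have hc : ⋃ i ∈ Finset.univ, (g i) • (H i : Set G) = Set.univ := by
    refine Set.eq_univ_of_forall fun x => ?_
    obtain ⟨s, hs, -⟩ := hcov x
    simp only [Set.mem_iUnion]
    exact ⟨s, Finset.mem_univ _, (mem_leftCoset_iff _).2 hs⟩
  have h := Subgroup.leftCoset_cover_filter_FiniteIndex hc
  have hx : g r ∈ (Set.univ : Set G) := Set.mem_univ _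
  rw [← h] at hx
  simp only [Set.mem_iUnion] at hx
  obtain ⟨s, hs, hxs⟩ := hx
  have hrs : r = s := (hcov (g r)).unique (by simp [one_mem]) ((mem_leftCoset_iff _).1 hxs)
  rw [hrs]
  exact (Finset.mem_filter.1 hs).2

/-- In a finite partition of a group into left cosets `g r • H r`, the densities
`1 / [G : H r]` add up to `1`. -/
theorem sum_inv_index_of_partition {G ι : Type*} [Group G] [Fintype ι]
    (H : ι → Subgroup G) (g : ι → G) (hcov : ∀ x, ∃! r, (g r)⁻¹ * x ∈ H r) :
    ∑ r, ((H r).index : ℚ)⁻¹ = 1 := by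
  have hfin := finiteIndex_of_partition H g hcov
  -- The normal core `N` of the intersection has finite index; the cosets are counted in `G ⧸ N`.
  have hD : (⨅ r, H r).FiniteIndex := Subgroup.finiteIndex_iInf hfin
  set N := (⨅ r, H r).normalCore with hN
  have hNfin : N.FiniteIndex := inferInstance
  have hNle : ∀ r, N ≤ H r := fun r => (Subgroup.normalCore_le _).trans (iInf_le _ r)
  let f := QuotientGroup.mk' N
  have hf : Function.Surjective f := QuotientGroup.mk'_surjective N
  have hker : f.ker = N := QuotientGroup.ker_mk' N
  have hmem : ∀ r x, f x ∈ (H r).map f ↔ x ∈ H r := by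
    intro r x
    rw [← Subgroup.mem_comap, Subgroup.comap_map_eq_self (by rw [hker]; exact hNle r)]
  have hindex : ∀ r, ((H r).map f).index = (H r).index := by
    intro r
    rw [← Subgroup.index_comap_of_surjective _ hf,
      Subgroup.comap_map_eq_self (by rw [hker]; exact hNle r)]
  have hQ : Finite (G ⧸ N) := inferInstance
  have hbij : Function.Bijective
      (fun p : (Σ r, ((H r).map f : Subgroup (G ⧸ N))) => f (g p.1) * (p.2 : G ⧸ N)) := by
    constructor
    · rintro ⟨r, y, hy⟩ ⟨s, z, hz⟩ h
      simp only at h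
      obtain ⟨x, hx⟩ := hf (f (g r) * y)
      have h1 : (g r)⁻¹ * x ∈ H r := by
        rw [← hmem, map_mul, map_inv, hx]; simpa using hy
      have h2 : (g s)⁻¹ * x ∈ H s := by
        rw [← hmem, map_mul, map_inv, hx, h]; simpa using hz
      obtain rfl := (hcov x).unique h1 h2
      have := mul_left_cancel h
      subst this
      rfl
    · intro y
      obtain ⟨x, rfl⟩ := hf y
      obtain ⟨r, hr, -⟩ := hcov x
      exact ⟨⟨r, f ((g r)⁻¹ * x), (hmem _ _).2 hr⟩, by simp⟩
  have hcard : Nat.card (G ⧸ N) = ∑ r, Nat.card ((H r).map f) := by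
    rw [← Nat.card_congr (Equiv.ofBijective _ hbij), Nat.card_sigma]
  have hpos : (Nat.card (G ⧸ N) : ℚ) ≠ 0 := by exact_mod_cast Nat.card_pos.ne'
  have hterm : ∀ r, ((H r).index : ℚ)⁻¹ = (Nat.card ((H r).map f) : ℚ) / Nat.card (G ⧸ N) := by
    intro r
    have h1 := Subgroup.card_mul_index ((H r).map f)
    rw [hindex] at h1
    have h2 : ((H r).index : ℚ) ≠ 0 := by exact_mod_cast (hfin r).index_ne_zero
    rw [← h1] at hpos ⊢
    push_cast at hpos ⊢
    have h3 := left_ne_zero_of_mul hpos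
    field_simp
  rw [Finset.sum_congr rfl fun r _ => hterm r, ← Finset.sum_div, div_eq_one_iff_eq hpos, hcard]
  push_cast
  rfl

/-! ### Principal congruence subgroups -/

/-- The principal congruence subgroup `K(t)` of `GL₂(F)`: matrices that, like their inverses, have
the form `1 + t C` with `C` over `O`. The condition on the inverse makes this a subgroup for
every `t`, and is automatic for `t` in the maximal ideal (`mem_congrSubgroup_iff`). -/
def congrSubgroup {F : Type*} [Field F] {O : Subring F} (t : O) : Subgroup (GL (Fin 2) F) where
  carrier := {g | (∃ C : Matrix (Fin 2) (Fin 2) O,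
      (g : Matrix (Fin 2) (Fin 2) F) = O.subtype.mapMatrix (1 + t • C)) ∧
    ∃ C : Matrix (Fin 2) (Fin 2) O,
      ((g⁻¹ : GL (Fin 2) F) : Matrix (Fin 2) (Fin 2) F) = O.subtype.mapMatrix (1 + t • C)}
  one_mem' := ⟨⟨0, by simp⟩, ⟨0, by simp⟩⟩
  inv_mem' := fun h => ⟨h.2, by simpa using h.1⟩
  mul_mem' := by
    rintro a b ⟨⟨A, hA⟩, A', hA'⟩ ⟨⟨B, hB⟩, B', hB'⟩
    refine ⟨⟨A + B + t • (A * B), ?_⟩, ⟨B' + A' + t • (B' * A'), ?_⟩⟩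
    · rw [Units.val_mul, hA, hB, ← map_mul]
      congr 1
      simp only [add_mul, mul_add, one_mul, mul_one, smul_add, smul_mul_assoc, mul_smul_comm]
      abel
    · rw [_root_.mul_inv_rev, Units.val_mul, hA', hB', ← map_mul]
      congr 1
      simp only [add_mul, mul_add, one_mul, mul_one, smul_add, smul_mul_assoc, mul_smul_comm]
      abel

section Congruence

variable {F : Type*} [Field F] {O : Subring F}

theorem mapMatrix_subtype_injective :
    Function.Injective (O.subtype.mapMatrix : Matrix (Fin 2) (Fin 2) O →+* _) := by
  intro A B h
  ext a b
  exact congrFun (congrFun h a) b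

theorem isUnit_one_add_smul_s16 [IsLocalRing O] {t : O} (ht : t ∈ IsLocalRing.maximalIdeal O)
    (C : Matrix (Fin 2) (Fin 2) O) : IsUnit (1 + t • C) := by
  rw [Matrix.isUnit_iff_isUnit_det]
  refine isUnit_of_map_unit (IsLocalRing.residue O) _ ?_
  have h0 : IsLocalRing.residue O t = 0 := (IsLocalRing.residue_eq_zero_iff t).2 ht
  rw [RingHom.map_det]
  have : (IsLocalRing.residue O).mapMatrix (1 + t • C) = 1 := by
    rw [map_add, map_one]
    ext a b
    simp [h0]
  rw [this]
  simp

theorem mem_congrSubgroup_iff [IsLocalRing O] {t : O} (ht : t ∈ IsLocalRing.maximalIdeal O)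
    (g : GL (Fin 2) F) :
    g ∈ congrSubgroup t ↔ ∃ C : Matrix (Fin 2) (Fin 2) O,
      (g : Matrix (Fin 2) (Fin 2) F) = O.subtype.mapMatrix (1 + t • C) := by
  refine ⟨fun h => h.1, fun h => ⟨h, ?_⟩⟩
  obtain ⟨C, hC⟩ := h
  obtain ⟨u, hu⟩ := isUnit_one_add_smul_s16 ht C
  have hg : g = Units.map (O.subtype.mapMatrix : Matrix (Fin 2) (Fin 2) O →+* _).toMonoidHom u := by
    ext1
    rw [hC, ← hu]
    rfl
  -- With `D = (1 + t C)⁻¹` over `O`, one has `D = 1 - t C D`.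
  refine ⟨-(C * (↑u⁻¹ : Matrix (Fin 2) (Fin 2) O)), ?_⟩
  rw [hg, ← map_inv]
  change O.subtype.mapMatrix (↑u⁻¹ : Matrix (Fin 2) (Fin 2) O) = _
  congr 1
  have h1 : (u : Matrix (Fin 2) (Fin 2) O) * (↑u⁻¹ : Matrix (Fin 2) (Fin 2) O) = 1 := u.mul_inv
  rw [hu, add_mul, one_mul, smul_mul_assoc] at h1
  rw [smul_neg, ← h1]
  abel

theorem exists_mem_congrSubgroup [IsLocalRing O] {t : O} (ht : t ∈ IsLocalRing.maximalIdeal O)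
    (C : Matrix (Fin 2) (Fin 2) O) : ∃ g ∈ congrSubgroup t,
      (g : Matrix (Fin 2) (Fin 2) F) = O.subtype.mapMatrix (1 + t • C) := by
  obtain ⟨u, hu⟩ := isUnit_one_add_smul_s16 ht C
  have h : ((Units.map (O.subtype.mapMatrix : Matrix (Fin 2) (Fin 2) O →+* _).toMonoidHom u :
      GL (Fin 2) F) : Matrix (Fin 2) (Fin 2) F) = O.subtype.mapMatrix (1 + t • C) := by
    rw [← hu]
    rfl
  exact ⟨_, (mem_congrSubgroup_iff ht _).2 ⟨C, h⟩, h⟩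

theorem congrSubgroup_le {t t' : O} (h : t ∣ t') :
    (congrSubgroup t' : Subgroup (GL (Fin 2) F)) ≤ congrSubgroup t := by
  obtain ⟨c, rfl⟩ := h
  rintro g ⟨⟨C, hC⟩, D, hD⟩
  exact ⟨⟨c • C, by rw [hC, mul_smul]⟩, ⟨c • D, by rw [hD, mul_smul]⟩⟩

/-- The converse of `congrSubgroup_le`, seen on the upper right entry of
`1 + t' C` with `C` the all-ones matrix. -/
theorem dvd_of_congrSubgroup_le [IsLocalRing O] {t t' : O}
    (ht' : t' ∈ IsLocalRing.maximalIdeal O)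
    (h : (congrSubgroup t' : Subgroup (GL (Fin 2) F)) ≤ congrSubgroup t) : t ∣ t' := by
  obtain ⟨g, hg, hgC⟩ := exists_mem_congrSubgroup ht' (Matrix.of fun _ _ => (1 : O))
  obtain ⟨⟨C, hC⟩, -⟩ := h hg
  have h1 := mapMatrix_subtype_injective (hgC.symm.trans hC)
  have h2 := congrFun (congrFun h1 0) 1
  simp at h2
  exact ⟨_, h2⟩

/-- `1 + t C ↦ C mod 𝔪` identifies `K(t) / K(t s)` with `M₂(O / 𝔪)` when `𝔪 = (s)`. -/
theorem relIndex_congrSubgroup_mul [IsLocalRing O] {t s : O} (ht0 : t ≠ 0)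
    (ht : t ∈ IsLocalRing.maximalIdeal O) (hs : ∀ x, x ∈ IsLocalRing.maximalIdeal O ↔ s ∣ x) :
    (congrSubgroup (t * s) : Subgroup (GL (Fin 2) F)).relIndex (congrSubgroup t) =
      Nat.card (IsLocalRing.ResidueField O) ^ 4 := by
  choose C hC using fun g : (congrSubgroup t : Subgroup (GL (Fin 2) F)) => g.2.1
  have huniq : ∀ A B : Matrix (Fin 2) (Fin 2) O, O.subtype.mapMatrix (1 + t • A) =
      O.subtype.mapMatrix (1 + t • B) → A = B := by
    intro A B h
    have h1 := add_left_cancel (mapMatrix_subtype_injective h)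
    ext a b
    have h2 := congrFun (congrFun h1 a) b
    simp only [Matrix.smul_apply, smul_eq_mul] at h2
    exact congrArg Subtype.val (mul_left_cancel₀ ht0 h2)
  let k := IsLocalRing.ResidueField O
  have h0 : IsLocalRing.residue O t = 0 := (IsLocalRing.residue_eq_zero_iff t).2 ht
  let φ : (congrSubgroup t : Subgroup (GL (Fin 2) F)) →*
      Multiplicative (Matrix (Fin 2) (Fin 2) k) :=
    MonoidHom.mk' (fun g => Multiplicative.ofAdd ((IsLocalRing.residue O).mapMatrix (C g))) (by
      intro a b
      have hab : C (a * b) = C a + C b + t • (C a * C b) := by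
        apply huniq
        rw [← hC, Subgroup.coe_mul, Units.val_mul, hC, hC, ← map_mul]
        congr 1
        simp only [add_mul, mul_add, one_mul, mul_one, smul_add, smul_mul_assoc, mul_smul_comm]
        abel
      have : (IsLocalRing.residue O).mapMatrix (t • (C a * C b)) = 0 := by
        ext x y
        simp only [RingHom.mapMatrix_apply, Matrix.map_apply, Matrix.smul_apply, smul_eq_mul,
          map_mul, h0, zero_mul, Matrix.zero_apply]
      rw [hab, RingHom.map_add, this, add_zero, RingHom.map_add, ofAdd_add])
  have hts : t * s ∈ IsLocalRing.maximalIdeal O := Ideal.mul_mem_right _ _ ht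
  have hker : φ.ker = (congrSubgroup (t * s)).subgroupOf (congrSubgroup t) := by
    ext g
    rw [MonoidHom.mem_ker, Subgroup.mem_subgroupOf, mem_congrSubgroup_iff hts]
    change (IsLocalRing.residue O).mapMatrix (C g) = 0 ↔ _
    constructor
    · intro h
      have h1 : ∀ a b, s ∣ C g a b := fun a b => by
        rw [← hs, ← IsLocalRing.residue_eq_zero_iff]
        exact congrFun (congrFun h a) b
      choose D hD using h1
      refine ⟨Matrix.of D, ?_⟩
      rw [hC, mul_smul]
      congr 3
      ext a b
      rw [hD a b]
      rfl
    · rintro ⟨D, hD⟩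
      rw [hC, mul_smul] at hD
      rw [huniq _ _ hD]
      ext a b
      change IsLocalRing.residue O (s * D a b) = 0
      rw [IsLocalRing.residue_eq_zero_iff, hs]
      exact dvd_mul_right _ _
  have hsurj : Function.Surjective φ := by
    intro M
    choose D hD using fun a b => IsLocalRing.residue_surjective (R := O) (M.toAdd a b)
    obtain ⟨g, hg, hgD⟩ := exists_mem_congrSubgroup (F := F) ht (Matrix.of D)
    refine ⟨⟨g, hg⟩, ?_⟩
    have h1 : C ⟨g, hg⟩ = Matrix.of D := huniq _ _ ((hC ⟨g, hg⟩).symm.trans hgD)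
    change Multiplicative.ofAdd ((IsLocalRing.residue O).mapMatrix (C ⟨g, hg⟩)) = M
    rw [h1]
    apply Multiplicative.toAdd.injective
    ext a b
    exact hD a b
  rw [Subgroup.relIndex, ← hker, Subgroup.index_ker, MonoidHom.range_eq_top.2 hsurj,
    Subgroup.card_top]
  change Nat.card (Fin 2 → Fin 2 → k) = _
  rw [Nat.card_fun, Nat.card_fun, Nat.card_fin, ← pow_mul]

theorem relIndex_congrSubgroup_mul_pow [IsLocalRing O] {t s : O} (ht0 : t ≠ 0) (hs0 : s ≠ 0)
    (ht : t ∈ IsLocalRing.maximalIdeal O) (hs : ∀ x, x ∈ IsLocalRing.maximalIdeal O ↔ s ∣ x)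
    (N : ℕ) :
    (congrSubgroup (t * s ^ N) : Subgroup (GL (Fin 2) F)).relIndex (congrSubgroup t) =
      Nat.card (IsLocalRing.ResidueField O) ^ (4 * N) := by
  induction N with
  | zero => simp
  | succ N ih =>
    have h := relIndex_congrSubgroup_mul (F := F) (t := t * s ^ N)
      (mul_ne_zero ht0 (pow_ne_zero _ hs0)) (Ideal.mul_mem_right _ _ ht) hs
    rw [pow_succ, ← mul_assoc, ← Subgroup.relIndex_mul_relIndex
      (congrSubgroup (t * s ^ N * s)) (congrSubgroup (t * s ^ N)) (congrSubgroup t)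
      (congrSubgroup_le (dvd_mul_right _ _)) (congrSubgroup_le (dvd_mul_right _ _)), h, ih]
    ring

/-- If `t'` is divisible by all `t s ^ N`, then `K(t')` has infinite index in `K(t)`
(encoded as `relIndex = 0`), since a finite index would be divisible by all `q ^ (4 N)`. -/
theorem relIndex_congrSubgroup_eq_zero [IsLocalRing O] [Finite (IsLocalRing.ResidueField O)]
    {t s t' : O} (ht0 : t ≠ 0) (hs0 : s ≠ 0)
    (ht : t ∈ IsLocalRing.maximalIdeal O) (hs : ∀ x, x ∈ IsLocalRing.maximalIdeal O ↔ s ∣ x)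
    (h : ∀ N : ℕ, t * s ^ N ∣ t') :
    (congrSubgroup t' : Subgroup (GL (Fin 2) F)).relIndex (congrSubgroup t) = 0 := by
  by_contra hne
  set m := (congrSubgroup t' : Subgroup (GL (Fin 2) F)).relIndex (congrSubgroup t) with hm
  have h1 : Nat.card (IsLocalRing.ResidueField O) ^ (4 * m) ∣ m := by
    rw [← relIndex_congrSubgroup_mul_pow (F := F) ht0 hs0 ht hs m]
    exact Subgroup.relIndex_dvd_of_le_left _ (congrSubgroup_le (h m))
  have h2 := Nat.le_of_dvd (Nat.pos_of_ne_zero hne) h1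
  have h3 := Nat.lt_pow_self (n := 4 * m) (Finite.one_lt_card (α := IsLocalRing.ResidueField O))
  omega

theorem coe_congrSubgroup_eq_Kmat [IsLocalRing O] {t : O} (ht : t ∈ IsLocalRing.maximalIdeal O)
    {t1 t2 : F} {i j : ℤ} (h : (t : F) = t1 ^ i * t2 ^ j) :
    ((congrSubgroup t : Subgroup (GL (Fin 2) F)) : Set (GL (Fin 2) F)) = Kmat O t1 t2 i j := by
  ext g
  rw [SetLike.mem_coe, mem_congrSubgroup_iff ht]
  constructor
  · rintro ⟨C, hC⟩ a b
    refine ⟨C a b, (C a b).2, ?_⟩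
    rw [hC, ← h, map_add, map_one]
    rfl
  · intro hg
    choose c hc hgc using hg
    refine ⟨Matrix.of fun a b => ⟨c a b, hc a b⟩, ?_⟩
    ext a b
    rw [hgc, ← h, map_add, map_one]
    rfl

end Congruence

theorem mem_lmul_iff {G : Type*} [Group G] (H : Subgroup G) (g x : G) :
    x ∈ lmul g (H : Set G) ↔ g⁻¹ * x ∈ H := by
  constructor
  · rintro ⟨y, hy, rfl⟩
    simpa using hy
  · intro h
    exact ⟨_, h, by simp⟩

/-- A left coset of `K` partitioned into left cosets of subgroups `H r`: then `H r ≤ K`, all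
relative indices are finite, and the relative densities add up to `1`. -/
theorem coset_partition {G : Type*} [Group G] {n : ℕ} (K : Subgroup G) (H : Fin n → Subgroup G)
    (g : G) (gr : Fin n → G)
    (hdisj : ∀ r s, r ≠ s → Disjoint (lmul (gr r) (H r : Set G)) (lmul (gr s) (H s : Set G)))
    (hunion : lmul g (K : Set G) = ⋃ r, lmul (gr r) (H r : Set G)) :
    (∀ r, H r ≤ K) ∧ (∀ r, (H r).relIndex K ≠ 0) ∧
      ∑ r, ((H r).relIndex K : ℚ)⁻¹ = 1 := by
  have hsub : ∀ r x, (gr r)⁻¹ * x ∈ H r → g⁻¹ * x ∈ K := by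
    intro r x hx
    rw [← mem_lmul_iff, hunion]
    exact Set.mem_iUnion.2 ⟨r, (mem_lmul_iff _ _ _).2 hx⟩
  have hgr : ∀ r, g⁻¹ * gr r ∈ K := fun r => hsub r _ (by simp [one_mem])
  have hle : ∀ r, H r ≤ K := by
    intro r x hx
    have h1 := hsub r (gr r * x) (by simpa using hx)
    rw [← mul_assoc] at h1
    exact (K.mul_mem_cancel_left (hgr r)).1 h1
  have hcov : ∀ x : K, ∃! r, (⟨g⁻¹ * gr r, hgr r⟩ : K)⁻¹ * x ∈ (H r).subgroupOf K := by
    intro x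
    have hiff : ∀ r, (⟨g⁻¹ * gr r, hgr r⟩ : K)⁻¹ * x ∈ (H r).subgroupOf K ↔
        g * (x : G) ∈ lmul (gr r) (H r : Set G) := by
      intro r
      rw [mem_lmul_iff, Subgroup.mem_subgroupOf]
      simp [mul_assoc]
    simp only [hiff]
    have hx : g * (x : G) ∈ lmul g (K : Set G) := ⟨x, x.2, rfl⟩
    rw [hunion] at hx
    obtain ⟨r, hr⟩ := Set.mem_iUnion.1 hx
    refine ⟨r, hr, fun s hs => ?_⟩
    by_contra hne
    exact Set.disjoint_left.1 (hdisj s r hne) hs hr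
  exact ⟨hle, fun r => (finiteIndex_of_partition _ _ hcov r).index_ne_zero,
    sum_inv_index_of_partition _ _ hcov⟩

/-- If a coset `g K_{i,j}` (`(i,j) > (0,0)`) is the union of finitely
many pairwise disjoint cosets `gᵣ K_{iᵣ,jᵣ}`, then `jᵣ = j` for every `r` and
`∑ᵣ q^{−4iᵣ} = q^{−4i}` in `ℚ`. -/
theorem statement16
    {F : Type*} [Field F] (v : F → ℤ × ℤ)
    (hv_mul : ∀ x y : F, x ≠ 0 → y ≠ 0 → v (x * y) = v x + v y)
    (hv_add : ∀ x y : F, x ≠ 0 → y ≠ 0 → x + y ≠ 0 →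
      RLex (v x) (v (x + y)) ∨ RLex (v y) (v (x + y)))
    (hv_surj : ∀ p : ℤ × ℤ, ∃ x : F, x ≠ 0 ∧ v x = p)
    (O : Subring F) (hO : ∀ x : F, x ∈ O ↔ x = 0 ∨ RLex (0, 0) (v x))
    (t1 t2 : F) (ht1 : t1 ≠ 0) (ht2 : t2 ≠ 0)
    (hvt1 : v t1 = (1, 0)) (hvt2 : v t2 = (0, 1))
    [IsLocalRing ↥O] [Finite (IsLocalRing.ResidueField ↥O)] (q : ℕ)
    (hq : Nat.card (IsLocalRing.ResidueField ↥O) = q)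
    (g : GL (Fin 2) F) (i j : ℤ) (hij : RLt (0, 0) (i, j))
    (n : ℕ) (gr : Fin n → GL (Fin 2) F) (ir jr : Fin n → ℤ)
    (hr : ∀ r, RLt (0, 0) (ir r, jr r))
    (hdisj : ∀ r s, r ≠ s →
      Disjoint (lmul (gr r) (Kmat O t1 t2 (ir r) (jr r)))
        (lmul (gr s) (Kmat O t1 t2 (ir s) (jr s))))
    (hunion : lmul g (Kmat O t1 t2 i j) = ⋃ r, lmul (gr r) (Kmat O t1 t2 (ir r) (jr r))) :
    (∀ r, jr r = j) ∧ ∑ r, (q : ℚ) ^ (-(4 * ir r)) = (q : ℚ) ^ (-(4 * i)) := by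
  have hmk : ∀ x y : Fˣ, v (x * y : F) = v x + v y := fun x y => hv_mul _ _ x.ne_zero y.ne_zero
  let w : Fˣ →* Multiplicative (ℤ × ℤ) :=
    MonoidHom.mk' (fun x => Multiplicative.ofAdd (v x)) (fun x y => by
      rw [Units.val_mul, hmk]; rfl)
  have hvt : ∀ a b : ℤ, v (t1 ^ a * t2 ^ b) = (a, b) := by
    intro a b
    have h : w (Units.mk0 t1 ht1 ^ a * Units.mk0 t2 ht2 ^ b) =
        Multiplicative.ofAdd (a • v t1 + b • v t2) := by
      rw [map_mul, map_zpow, map_zpow]; rfl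
    have h' := congrArg Multiplicative.toAdd h
    change v _ = _ at h'
    rw [hvt1, hvt2] at h'
    simpa using h'
  have ht0 : ∀ a b : ℤ, t1 ^ a * t2 ^ b ≠ 0 := fun a b =>
    mul_ne_zero (zpow_ne_zero _ ht1) (zpow_ne_zero _ ht2)
  have hv1 : v 1 = (0, 0) := by simpa using hvt 0 0
  have hvinv : ∀ x : F, x ≠ 0 → v x + v x⁻¹ = (0, 0) := by
    intro x hx
    rw [← hv_mul x _ hx (inv_ne_zero hx), mul_inv_cancel₀ hx, hv1]
  have hm : ∀ x : O, x ∈ IsLocalRing.maximalIdeal O ↔ (x : F) = 0 ∨ RLt (0, 0) (v x) := by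
    intro x
    rw [IsLocalRing.mem_maximalIdeal, mem_nonunits_iff]
    constructor
    · intro hx
      by_contra! hc
      apply hx
      have h1 := ((hO x).1 x.2).resolve_left hc.1
      have hlt := hc.2
      have h2 := hvinv x hc.1
      have h3 : (x : F)⁻¹ ∈ O := by
        rw [hO]
        right
        simp only [RLex, RLt, Prod.ext_iff, Prod.fst_add, Prod.snd_add] at h1 h2 hlt ⊢
        omega
      exact IsUnit.of_mul_eq_one ⟨_, h3⟩ (Subtype.ext (mul_inv_cancel₀ hc.1))
    · intro hx hu
      obtain ⟨y, hy⟩ := hu.exists_right_inv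
      have hy' : (x : F) * y = 1 := congrArg Subtype.val hy
      have hx0 : (x : F) ≠ 0 := left_ne_zero_of_mul_eq_one hy'
      have hy0 : (y : F) ≠ 0 := right_ne_zero_of_mul_eq_one hy'
      have h1 := hv_mul _ _ hx0 hy0
      rw [hy', hv1] at h1
      have h2 := ((hO y).1 y.2).resolve_left hy0
      have h3 := hx.resolve_left hx0
      simp only [RLex, RLt, Prod.ext_iff, Prod.fst_add, Prod.snd_add] at h1 h2 h3
      omega
  have hdvd : ∀ x y : O, (x : F) ≠ 0 → ((y : F) = 0 ∨ RLex (v x) (v y)) → x ∣ y := by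
    intro x y hx hy
    rcases hy with hy | hy
    · exact ⟨0, Subtype.ext (by simpa using hy)⟩
    · by_cases hy0 : (y : F) = 0
      · exact ⟨0, Subtype.ext (by simpa using hy0)⟩
      have h1 := hv_mul _ _ hy0 (inv_ne_zero hx)
      have h2 := hvinv x hx
      have h3 : (y : F) * (x : F)⁻¹ ∈ O := by
        rw [hO]
        right
        rw [h1]
        simp only [RLex, Prod.ext_iff, Prod.fst_add, Prod.snd_add] at h2 hy ⊢
        omega
      refine ⟨⟨_, h3⟩, Subtype.ext ?_⟩
      change (y : F) = x * (y * (x : F)⁻¹)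
      field_simp
  have hex : ∀ a b : ℤ, RLt (0, 0) (a, b) → ∃ t : O, (t : F) = t1 ^ a * t2 ^ b := by
    intro a b h
    refine ⟨⟨_, (hO _).2 (Or.inr ?_)⟩, rfl⟩
    rw [hvt]
    simp only [RLex, RLt] at *
    omega
  choose τ hτ using hex
  have hτm : ∀ a b h, τ a b h ∈ IsLocalRing.maximalIdeal O := by
    intro a b h
    rw [hm, hτ, hvt]
    exact Or.inr h
  have hτ0 : ∀ a b h, τ a b h ≠ 0 := fun a b h hz =>
    ht0 a b (by rw [← hτ a b h, hz]; rfl)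
  -- The uniformizer `t₁` as an element of `O`; it generates the maximal ideal.
  obtain ⟨s, hs⟩ : ∃ s : O, (s : F) = t1 := ⟨⟨t1, (hO _).2 (Or.inr (by simp [hvt1, RLex]))⟩, rfl⟩
  have hs0 : s ≠ 0 := fun hz => ht1 (by rw [← hs, hz]; rfl)
  have hsm : ∀ x, x ∈ IsLocalRing.maximalIdeal O ↔ s ∣ x := by
    intro x
    constructor
    · intro hx
      apply hdvd _ _ (by rwa [hs])
      rcases (hm x).1 hx with h | h
      · exact Or.inl h
      · right
        rw [hs, hvt1]
        simp only [RLex, RLt] at *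
        omega
    · rintro ⟨c, rfl⟩
      refine Ideal.mul_mem_right _ _ ((hm s).2 (Or.inr ?_))
      rw [hs, hvt1]
      simp [RLt]
  rw [← coe_congrSubgroup_eq_Kmat (hτm i j hij) (hτ i j hij)] at hunion
  simp only [← fun r => coe_congrSubgroup_eq_Kmat (hτm _ _ (hr r)) (hτ _ _ (hr r))]
    at hunion hdisj
  obtain ⟨hle, hfin, hsum⟩ := coset_partition _ _ g gr hdisj hunion
  have hpow : ∀ N : ℕ, ((τ i j hij * s ^ N : O) : F) = t1 ^ (i + N) * t2 ^ j := by
    intro N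
    rw [Subring.coe_mul, Subring.coe_pow, hτ, hs, zpow_add₀ ht1, zpow_natCast]
    ring
  have horder : ∀ r, RLex (i, j) (ir r, jr r) := by
    intro r
    obtain ⟨c, hc⟩ := dvd_of_congrSubgroup_le (hτm _ _ (hr r)) (hle r)
    have hc' : t1 ^ ir r * t2 ^ jr r = t1 ^ i * t2 ^ j * (c : F) := by
      rw [← hτ _ _ (hr r), ← hτ _ _ hij, hc]; rfl
    have hc0 : (c : F) ≠ 0 := by
      intro h0
      rw [h0, mul_zero] at hc'
      exact ht0 _ _ hc'
    have h1 := hv_mul _ _ (ht0 i j) hc0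
    rw [← hc', hvt, hvt] at h1
    have h2 := ((hO c).1 c.2).resolve_left hc0
    simp only [RLex, Prod.ext_iff, Prod.fst_add, Prod.snd_add] at h1 h2 ⊢
    omega
  have hj : ∀ r, jr r = j := by
    intro r
    by_contra hne
    refine hfin r (relIndex_congrSubgroup_eq_zero (hτ0 _ _ _) hs0 (hτm _ _ _) hsm fun N => ?_)
    refine hdvd _ _ (by rw [hpow]; exact ht0 _ _) (Or.inr ?_)
    rw [hpow, hτ, hvt, hvt]
    have := horder r
    simp only [RLex] at *
    omega
  refine ⟨hj, ?_⟩
  have hq0 : (q : ℚ) ≠ 0 := by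
    rw [← hq]
    exact_mod_cast Nat.card_pos.ne'
  have hterm : ∀ r, (q : ℚ) ^ (-(4 * ir r)) = (q : ℚ) ^ (-(4 * i)) *
      (((congrSubgroup (τ _ _ (hr r)) : Subgroup (GL (Fin 2) F)).relIndex
        (congrSubgroup (τ i j hij)) : ℕ) : ℚ)⁻¹ := by
    intro r
    have h1 := horder r
    have h2 := hj r
    obtain ⟨N, hN⟩ : ∃ N : ℕ, ir r = i + N := by
      refine ⟨(ir r - i).toNat, ?_⟩
      simp only [RLex] at h1
      omega
    have h3 : τ _ _ (hr r) = τ i j hij * s ^ N := by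
      apply Subtype.ext
      rw [hpow, hτ, hN, h2]
    rw [h3, relIndex_congrSubgroup_mul_pow (hτ0 _ _ _) hs0 (hτm _ _ _) hsm, hq, hN]
    push_cast
    rw [← zpow_natCast, ← _root_.zpow_neg, ← zpow_add₀ hq0]
    congr 1
    push_cast
    ring
  rw [Finset.sum_congr rfl fun r _ => hterm r, ← Finset.mul_sum, hsum, mul_one]
end
end

section
/- The ring O_F is a local ring whose maximal ideal is the principal ideal t_1 O_F; moreover, the quotient ring O_F / t_2 O_F is infinite. -/
/-! The value `(1, 0)` is the least one above `(0, 0)`, and the units of `O` are the elements of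
value `(0, 0)`. Hence the nonunits of `O` are exactly the multiples of `t₁`; they are closed under
addition, so `O` is local with maximal ideal `t₁ O`.

The powers `t₁ ^ n` are pairwise distinct modulo `t₂`: for `m < n` the difference
`t₁ ^ m - t₁ ^ n` is the unit `1 - t₁ ^ (n - m)` times `t₁ ^ m`, and `t₂` does not divide
`t₁ ^ m`, since the quotient would have value `(m, -1)`. -/

noncomputable section

/-- The ring `O_F` is a local ring whose maximal ideal is the principal
ideal `t₁ O_F`; moreover the quotient ring `O_F / t₂ O_F` is infinite. -/
theorem statement18
    {F : Type*} [Field F] (v : F → ℤ × ℤ)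
    (hv_mul : ∀ x y : F, x ≠ 0 → y ≠ 0 → v (x * y) = v x + v y)
    (hv_add : ∀ x y : F, x ≠ 0 → y ≠ 0 → x + y ≠ 0 →
      RLex (v x) (v (x + y)) ∨ RLex (v y) (v (x + y)))
    (hv_surj : ∀ p : ℤ × ℤ, ∃ x : F, x ≠ 0 ∧ v x = p)
    (O : Subring F) (hO : ∀ x : F, x ∈ O ↔ x = 0 ∨ RLex (0, 0) (v x))
    (t1 t2 : F) (ht1 : t1 ≠ 0) (ht2 : t2 ≠ 0)
    (hvt1 : v t1 = (1, 0)) (hvt2 : v t2 = (0, 1))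
    (t1m t2m : O) (ht1m : (t1m : F) = t1) (ht2m : (t2m : F) = t2) :
    ∃ h : IsLocalRing ↥O,
      @IsLocalRing.maximalIdeal ↥O _ h = Ideal.span {t1m} ∧
      Infinite (↥O ⧸ (Ideal.span {t2m} : Ideal ↥O)) := by
  have hv1 : v 1 = 0 := by
    have h := hv_mul 1 1 one_ne_zero one_ne_zero
    rw [mul_one] at h
    simpa using h
  have hinv (x : F) (hx : x ≠ 0) : v x⁻¹ = -v x := by
    have h := hv_mul x x⁻¹ hx (inv_ne_zero hx)
    rw [mul_inv_cancel₀ hx, hv1] at h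
    exact (neg_eq_of_add_eq_zero_right h.symm).symm
  have hpow (n : ℕ) : v (t1 ^ n) = ((n : ℤ), 0) := by
    induction n with
    | zero => rw [pow_zero, hv1]; rfl
    | succ k ih =>
      rw [pow_succ, hv_mul _ _ (pow_ne_zero k ht1) ht1, ih, hvt1]
      ext <;> simp
  have ht1_nonunit : ¬ IsUnit t1m := by
    intro h
    obtain ⟨c, hc⟩ := h.exists_right_inv
    have hcF : t1 * (c : F) = 1 := by
      rw [← ht1m]
      exact_mod_cast congrArg (Subtype.val) hc
    have hc' : (c : F) = t1⁻¹ := eq_inv_of_mul_eq_one_right hcF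
    rcases (hO c).1 c.2 with h0 | h0
    · rw [h0, mul_zero] at hcF
      exact zero_ne_one hcF
    · rw [hc', hinv _ ht1, hvt1] at h0
      simp [RLex] at h0
  have hdvd (x : O) (hx : ¬ IsUnit x) : t1m ∣ x := by
    by_cases hx0 : (x : F) = 0
    · have : x = 0 := Subtype.ext hx0
      rw [this]
      exact dvd_zero _
    have hxO := ((hO x).1 x.2).resolve_left hx0
    have hne : v (x : F) ≠ 0 := by
      intro h0
      have hmem : (x : F)⁻¹ ∈ O := by
        rw [hO, hinv _ hx0, h0]
        right
        simp [RLex]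
      exact hx (IsUnit.of_mul_eq_one ⟨_, hmem⟩ (Subtype.ext (mul_inv_cancel₀ hx0)))
    -- The order is discrete: a value above `(0, 0)` is at least `(1, 0)`.
    have hmem : t1⁻¹ * (x : F) ∈ O := by
      rw [hO, hv_mul _ _ (inv_ne_zero ht1) hx0, hinv _ ht1, hvt1]
      right
      simp only [RLex, ne_eq, Prod.ext_iff, Prod.fst_add, Prod.snd_add, Prod.fst_neg,
        Prod.snd_neg, Prod.fst_zero, Prod.snd_zero] at hxO hne ⊢
      omega
    refine ⟨⟨_, hmem⟩, Subtype.ext ?_⟩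
    change (x : F) = (t1m : F) * (t1⁻¹ * (x : F))
    rw [ht1m, mul_inv_cancel_left₀ ht1]
  have hnot_dvd (n : ℕ) : ¬ t2m ∣ t1m ^ n := by
    rintro ⟨c, hc⟩
    have hcF : t1 ^ n = t2 * (c : F) := by
      rw [← ht1m, ← ht2m]
      exact_mod_cast congrArg (Subtype.val) hc
    have hc0 : (c : F) ≠ 0 := by
      intro h0
      rw [h0, mul_zero] at hcF
      exact pow_ne_zero n ht1 hcF
    have hval := congrArg v hcF
    rw [hpow, hv_mul _ _ ht2 hc0, hvt2] at hval
    have hcO := ((hO c).1 c.2).resolve_left hc0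
    simp only [RLex, Prod.ext_iff, Prod.fst_add, Prod.snd_add] at hval hcO
    omega
  have hnonunit_iff (x : O) : ¬ IsUnit x ↔ t1m ∣ x :=
    ⟨hdvd x, fun h hu => ht1_nonunit (isUnit_of_dvd_unit h hu)⟩
  have : Nontrivial O := inferInstance
  have hloc : IsLocalRing O := IsLocalRing.of_nonunits_add fun a b ha hb =>
    (hnonunit_iff _).2 (dvd_add (hdvd a ha) (hdvd b hb))
  refine ⟨hloc, ?_, ?_⟩
  · ext x
    rw [IsLocalRing.mem_maximalIdeal, mem_nonunits_iff, hnonunit_iff, Ideal.mem_span_singleton]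
  · have hlt (m n : ℕ) (hmn : m < n) :
        Ideal.Quotient.mk (Ideal.span {t2m}) (t1m ^ m) ≠
          Ideal.Quotient.mk (Ideal.span {t2m}) (t1m ^ n) := by
      intro h
      rw [Ideal.Quotient.eq, Ideal.mem_span_singleton] at h
      obtain ⟨k, rfl⟩ := Nat.exists_eq_add_of_lt hmn
      have hu : IsUnit (1 - t1m ^ (k + 1)) := by
        by_contra hu
        have h1 : t1m ∣ 1 := by
          have := dvd_add (hdvd _ hu) (dvd_pow_self t1m k.succ_ne_zero)
          simpa using this
        exact ht1_nonunit (isUnit_of_dvd_one h1)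
      have hfac : t1m ^ m - t1m ^ (m + k + 1) = t1m ^ m * (1 - t1m ^ (k + 1)) := by ring
      rw [hfac, hu.dvd_mul_right] at h
      exact hnot_dvd m h
    refine Infinite.of_injective
      (fun n : ℕ => Ideal.Quotient.mk (Ideal.span {t2m}) (t1m ^ n)) fun m n h => ?_
    by_contra hne
    rcases lt_or_gt_of_ne hne with h' | h'
    · exact hlt m n h' h
    · exact hlt n m h' h.symm
end
end
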